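/- arXiv:1801.01489 — 2 statements merged into one kernel-verified Lean document; each statement's English description precedes it below -/
import Mathlib

section
/- Given ε ≥ 0 and δ ∈ (0,1), let f₊,ε ∈ argmax_{f∈R(ε)} MR(f) and f₋,ε ∈ argmin_{f∈R(ε)} MR(f) be models attaining the highest and lowest model reliance over R(ε). If f₊,ε and f₋,ε satisfy Assumptions 1, 2 and 3, then P( MCR₊(ε) > MCR̂₊(ε₁) + Q₁ ) ≤ δ and P( MCR₋(ε) < MCR̂₋(ε₁) − Q₁ ) ≤ δ, where ε₁ = ε + 2B_ref·√(log(3/δ)/(2n)) and Q₁ = B_switch/b_orig − (B_switch − B_ind·√(log(6/δ)/n)) / (b_orig + B_ind·√(log(6/δ)/(2n))). -/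
open MeasureTheory

/-!
The empirical switched loss is a U-statistic, and averaging over all relabellings of the sample
writes it as a mean of means over `⌊n / 2⌋` disjoint, hence independent, pairs; sub-Gaussianity
survives averaging, so Hoeffding's bounds hold for it as for a mean of `⌊n / 2⌋` variables. Applied
to the difference of losses with the reference model, Hoeffding's inequality also puts the extremal
model into the empirical Rashomon set of radius `ε₁`, so that its empirical reliance is bounded by
the empirical model class reliance. What remains is deterministic: `Q₁` is the most a ratio with
numerator at most `B_switch` and denominator at least `b_orig` can lose under the deviations.
-/

section

open ProbabilityTheory Finset
open scoped BigOperators NNReal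

theorem offDiag_univ_nonempty {ι : Type*} [Fintype ι] [Nontrivial ι] :
    (univ : Finset ι).offDiag.Nonempty := by
  obtain ⟨i, j, hij⟩ := exists_pair_ne ι
  exact ⟨(i, j), by simpa using hij⟩

theorem expect_perm_congr {ι M : Type*} [Fintype ι] [DecidableEq ι] [AddCommMonoid M]
    [Module ℚ≥0 M] {a b c d : ι} (hab : a ≠ b) (hcd : c ≠ d) (g : ι × ι → M) :
    𝔼 σ : Equiv.Perm ι, g (σ a, σ b) = 𝔼 σ : Equiv.Perm ι, g (σ c, σ d) := by
  have : MulAction.IsMultiplyPretransitive (Equiv.Perm ι) ι 2 :=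
    Equiv.Perm.isMultiplyPretransitive ι 2
  obtain ⟨τ, rfl, rfl⟩ := MulAction.is_two_pretransitive_iff.mp this hcd hab
  exact Fintype.expect_equiv (Equiv.mulRight τ) (fun σ => g (σ (τ • c), σ (τ • d)))
    (fun σ => g (σ c, σ d)) fun σ => rfl

theorem expect_perm_eq_expect_offDiag {ι M : Type*} [Fintype ι] [DecidableEq ι] [AddCommMonoid M]
    [Module ℚ≥0 M] {a b : ι} (hab : a ≠ b) (g : ι × ι → M) :
    𝔼 σ : Equiv.Perm ι, g (σ a, σ b) = 𝔼 p ∈ (univ : Finset ι).offDiag, g p := by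
  have offDiag_nonempty : (univ : Finset ι).offDiag.Nonempty := ⟨(a, b), by simpa using hab⟩
  calc 𝔼 σ : Equiv.Perm ι, g (σ a, σ b)
      = 𝔼 p ∈ (univ : Finset ι).offDiag, 𝔼 σ : Equiv.Perm ι, g (σ p.1, σ p.2) := by
        rw [← expect_const offDiag_nonempty (𝔼 σ : Equiv.Perm ι, g (σ a, σ b))]
        exact expect_congr rfl fun p hp => expect_perm_congr hab (mem_offDiag.mp hp).2.2 g
    _ = 𝔼 σ : Equiv.Perm ι, 𝔼 p ∈ (univ : Finset ι).offDiag, g (σ p.1, σ p.2) := expect_comm ..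
    _ = 𝔼 _σ : Equiv.Perm ι, 𝔼 p ∈ (univ : Finset ι).offDiag, g p :=
        expect_congr rfl fun σ _ =>
          expect_equiv (σ.prodCongr σ) (fun p => by simp) fun p _ => rfl
    _ = 𝔼 p ∈ (univ : Finset ι).offDiag, g p := expect_const univ_nonempty _

variable {ι κ Z : Type*} [Fintype ι] [Fintype κ]

/-- The empirical mean of `g` over the sample `ω`. -/
noncomputable def sampleMean (g : Z → ℝ) (ω : ι → Z) : ℝ := 𝔼 i, g (ω i)

/-- The U-statistic of order two with kernel `G`: the average of `G` over all ordered pairs of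
distinct sample points. -/
noncomputable def uStatistic (G : Z × Z → ℝ) (ω : ι → Z) : ℝ :=
  𝔼 p ∈ (univ : Finset ι).offDiag, G (ω p.1, ω p.2)

theorem uStatistic_eq_sum_div [DecidableEq ι] (G : Z × Z → ℝ) (ω : ι → Z) :
    uStatistic G ω = (∑ i, ∑ j ∈ univ.erase i, G (ω i, ω j)) /
      ((Fintype.card ι : ℝ) * ((Fintype.card ι : ℝ) - 1)) := by
  have offDiag_eq_sigma : ∑ p ∈ (univ : Finset ι).offDiag, G (ω p.1, ω p.2) =
      ∑ i, ∑ j ∈ univ.erase i, G (ω i, ω j) :=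
    sum_finset_product _ _ _ fun p => by simp [ne_comm]
  rw [uStatistic, expect_eq_sum_div_card, offDiag_eq_sigma, offDiag_card, card_univ,
    Nat.cast_sub (Nat.le_mul_self _), Nat.cast_mul, mul_sub_one]

theorem uStatistic_eq_expect_perm [DecidableEq ι] [Nonempty κ] {a b : κ → ι}
    (hab : ∀ k, a k ≠ b k) (G : Z × Z → ℝ) (ω : ι → Z) :
    uStatistic G ω =
      𝔼 σ : Equiv.Perm ι, sampleMean G fun k => (ω (σ (a k)), ω (σ (b k))) := by
  simp only [sampleMean]
  rw [expect_comm]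
  simp only [expect_perm_eq_expect_offDiag (hab _) fun p => G (ω p.1, ω p.2)]
  exact (expect_const univ_nonempty _).symm

theorem uStatistic_mem_Icc [Nontrivial ι] {G : Z × Z → ℝ} {a b : ℝ}
    (hG : ∀ q, G q ∈ Set.Icc a b) (ω : ι → Z) : uStatistic G ω ∈ Set.Icc a b :=
  ⟨le_expect offDiag_univ_nonempty fun _ _ => (hG _).1,
    expect_le offDiag_univ_nonempty fun _ _ => (hG _).2⟩

theorem sampleMean_neg (g : Z → ℝ) (ω : ι → Z) :
    sampleMean (-g) ω = -sampleMean g ω := expect_neg_distrib ..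

theorem sampleMean_sub (g h : Z → ℝ) (ω : ι → Z) :
    sampleMean (g - h) ω = sampleMean g ω - sampleMean h ω := expect_sub_distrib ..

theorem uStatistic_neg (G : Z × Z → ℝ) (ω : ι → Z) :
    uStatistic (-G) ω = -uStatistic G ω := expect_neg_distrib ..

variable [MeasurableSpace Z]

theorem measurePreserving_pi_reindex {X : ι → Type*}
    [∀ i, MeasurableSpace (X i)] (μ : ∀ i, Measure (X i)) [∀ i, IsProbabilityMeasure (μ i)]
    {f : κ → ι} (hf : f.Injective) :
    MeasurePreserving (fun (ω : ∀ i, X i) k => ω (f k)) (Measure.pi μ)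
      (Measure.pi fun k => μ (f k)) := by
  refine ⟨by fun_prop, ?_⟩
  have coords_indep : iIndepFun (fun i (ω : ∀ i, X i) => ω i) (Measure.pi μ) :=
    iIndepFun_pi (X := fun _ => id) fun _ => aemeasurable_id
  rw [(coords_indep.precomp hf).map_fun_eq_pi_map fun k => (measurable_pi_apply _).aemeasurable]
  congr with k : 1
  exact (measurePreserving_eval μ (f k)).map_eq

theorem measurePreserving_pairs (D : Measure Z) [IsProbabilityMeasure D] {a b : κ → ι}
    (hab : (Sum.elim a b).Injective) :
    MeasurePreserving (fun (ω : ι → Z) k => (ω (a k), ω (b k))) (Measure.pi fun _ => D)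
      (Measure.pi fun _ => D.prod D) :=
  (measurePreserving_arrowProdEquivProdArrow Z Z κ (fun _ => D) (fun _ => D)).symm.comp <|
    (measurePreserving_sumPiEquivProdPi fun _ : κ ⊕ κ => D).comp <|
      measurePreserving_pi_reindex (fun _ => D) hab

theorem measurePreserving_pair (D : Measure Z) [IsProbabilityMeasure D] {i j : ι} (hij : i ≠ j) :
    MeasurePreserving (fun ω : ι → Z => (ω i, ω j)) (Measure.pi fun _ => D) (D.prod D) :=
  (measurePreserving_eval (fun _ : Unit => D.prod D) ()).comp <|
    measurePreserving_pairs D (a := fun _ => i) (b := fun _ => j) <|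
      (Function.injective_of_subsingleton _).sumElim (Function.injective_of_subsingleton _)
        fun _ _ => hij

section ExpectComp

variable {Ω κ : Type*} [MeasurableSpace Ω] {μ : Measure Ω} {ν : Measure Z} {s : Finset κ}
  {T : κ → Ω → Z} {f : Z → ℝ}

theorem integrable_expect_comp (hT : ∀ k ∈ s, MeasurePreserving (T k) μ ν) (hf : Integrable f ν) :
    Integrable (fun ω => 𝔼 k ∈ s, f (T k ω)) μ := by
  simp only [expect_eq_sum_div_card]
  exact (integrable_finsetSum _ fun k hk => (hT k hk).integrable_comp_of_integrable hf).div_const _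

theorem integral_expect_comp (hs : s.Nonempty) (hT : ∀ k ∈ s, MeasurePreserving (T k) μ ν)
    (hf : Integrable f ν) : ∫ ω, 𝔼 k ∈ s, f (T k ω) ∂μ = ∫ z, f z ∂ν := by
  have integral_comp (k) (hk : k ∈ s) : ∫ ω, f (T k ω) ∂μ = ∫ z, f z ∂ν := by
    rw [← (hT k hk).map_eq, integral_map (hT k hk).aemeasurable]
    exact (hT k hk).map_eq ▸ hf.aestronglyMeasurable
  have integrable_comp (k) (hk : k ∈ s) : Integrable (fun ω => f (T k ω)) μ :=
    (hT k hk).integrable_comp_of_integrable hf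
  simp only [expect_eq_sum_div_card]
  rw [integral_div, integral_finsetSum _ integrable_comp, ← expect_eq_sum_div_card,
    expect_congr rfl integral_comp, expect_const hs]

end ExpectComp

section SubGaussian

variable {Ω ι : Type*} [MeasurableSpace Ω] {μ : Measure Ω} {X : ι → Ω → ℝ} {Y : Ω → ℝ} {c : ℝ≥0}

theorem hasSubgaussianMGF_sum [IsZeroOrProbabilityMeasure μ] {c : ι → ℝ≥0} {s : Finset ι}
    (hX : ∀ i ∈ s, HasSubgaussianMGF (X i) (c i) μ) :
    HasSubgaussianMGF (fun ω => ∑ i ∈ s, X i ω) ((∑ i ∈ s, NNReal.sqrt (c i)) ^ 2) μ := by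
  classical
  induction s using Finset.induction_on with
  | empty => simp
  | insert i s hi ih =>
    simp only [sum_insert hi]
    simpa using (hX i (mem_insert_self i s)).add (ih fun j hj => hX j (mem_insert_of_mem hj))

theorem hasSubgaussianMGF_div_const (hY : HasSubgaussianMGF Y c μ)
    (r : ℝ≥0) : HasSubgaussianMGF (fun ω => Y ω / r) (c / r ^ 2) μ := by
  convert hY.const_mul (r : ℝ)⁻¹ using 1
  · simp only [div_eq_inv_mul]
  · exact NNReal.eq <| by
      simp only [div_eq_inv_mul, NNReal.coe_mul, NNReal.coe_inv, NNReal.coe_pow, inv_pow]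
      rfl

theorem hasSubgaussianMGF_comp {Ω' : Type*} [MeasurableSpace Ω'] {ν : Measure Ω'} {f : Ω' → ℝ}
    (hf : HasSubgaussianMGF f c ν) {T : Ω → Ω'} (hT : MeasurePreserving T μ ν) :
    HasSubgaussianMGF (fun ω => f (T ω)) c μ :=
  .of_map hT.aemeasurable (hT.map_eq ▸ hf)

theorem hasSubgaussianMGF_expect [IsZeroOrProbabilityMeasure μ] {s : Finset ι}
    (hs : s.Nonempty) (hX : ∀ i ∈ s, HasSubgaussianMGF (X i) c μ) :
    HasSubgaussianMGF (fun ω => 𝔼 i ∈ s, X i ω) c μ := by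
  have card_ne_zero : (#s : ℝ≥0) ≠ 0 := Nat.cast_ne_zero.mpr hs.card_ne_zero
  convert hasSubgaussianMGF_div_const (hasSubgaussianMGF_sum hX) #s using 1
  · simp [expect_eq_sum_div_card]
  · simp [mul_pow, card_ne_zero]

theorem measureReal_sqrt_lt_le_exp_neg [IsProbabilityMeasure μ]
    (hY : HasSubgaussianMGF Y c μ) (l : ℝ) :
    μ.real {ω | √(2 * c * l) < Y ω} ≤ Real.exp (-l) := by
  rcases le_or_gt l 0 with hl | hl
  · exact measureReal_le_one.trans (Real.one_le_exp (by linarith))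
  rcases eq_zero_or_pos c with rfl | hc
  · have tail_null : μ.real {ω | √(2 * (0 : ℝ≥0) * l) < Y ω} = 0 := by
      refine (measureReal_eq_zero_iff).mpr (measure_eq_zero_iff_ae_notMem.mpr ?_)
      filter_upwards [hY.ae_eq_zero_of_hasSubgaussianMGF_zero] with ω hω
      simp [hω]
    exact tail_null.trans_le (Real.exp_nonneg _)
  · calc μ.real {ω | √(2 * c * l) < Y ω}
        ≤ μ.real {ω | √(2 * c * l) ≤ Y ω} :=
          measureReal_mono (Set.ofPred_subset_ofPred.mpr fun _ => le_of_lt)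
      _ ≤ Real.exp (-√(2 * c * l) ^ 2 / (2 * c)) := hY.measure_ge_le (Real.sqrt_nonneg _)
      _ = Real.exp (-l) := by
        rw [Real.sq_sqrt (by positivity)]
        field_simp

theorem measureReal_mul_sqrt_lt_le_exp [IsProbabilityMeasure μ] {B : ℝ} (hB : 0 ≤ B) {N : ℕ}
    (hN : N ≠ 0) (hY : HasSubgaussianMGF Y ((‖B‖₊ / 2) ^ 2 / N) μ) (t : ℝ) :
    μ.real {ω | B * √t < Y ω} ≤ Real.exp (-(2 * N * t)) := by
  have threshold : √(2 * ((‖B‖₊ / 2) ^ 2 / N : ℝ≥0) * (2 * N * t)) = B * √t := by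
    rw [← Real.sqrt_sq hB, ← Real.sqrt_mul (sq_nonneg B), Real.sqrt_sq hB]
    congr 1
    push_cast
    rw [Real.norm_of_nonneg hB]
    field_simp
  exact threshold ▸ measureReal_sqrt_lt_le_exp_neg hY (2 * N * t)

end SubGaussian

theorem hasSubgaussianMGF_sampleMean [Nonempty ι] (D : Measure Z) [IsProbabilityMeasure D]
    {g : Z → ℝ} (hg : Measurable g) {a b : ℝ} (hgab : ∀ z, g z ∈ Set.Icc a b) :
    HasSubgaussianMGF (fun ω : ι → Z => sampleMean g ω - ∫ z, g z ∂D)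
      ((‖b - a‖₊ / 2) ^ 2 / Fintype.card ι) (Measure.pi fun _ => D) := by
  have coords_indep : iIndepFun (fun (i : ι) (ω : ι → Z) => g (ω i) - ∫ z, g z ∂D)
      (Measure.pi fun _ => D) :=
    iIndepFun_pi (X := fun _ z => g z - ∫ z, g z ∂D) fun _ => by fun_prop
  have coord_subgaussian (i : ι) : HasSubgaussianMGF (fun ω : ι → Z => g (ω i) - ∫ z, g z ∂D)
      ((‖b - a‖₊ / 2) ^ 2) (Measure.pi fun _ => D) :=
    hasSubgaussianMGF_comp (hasSubgaussianMGF_of_mem_Icc hg.aemeasurable (ae_of_all _ hgab))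
      (measurePreserving_eval (fun _ : ι => D) i)
  have card_ne_zero : (Fintype.card ι : ℝ≥0) ≠ 0 := Nat.cast_ne_zero.mpr Fintype.card_ne_zero
  convert hasSubgaussianMGF_div_const (HasSubgaussianMGF.sum_of_iIndepFun coords_indep (s := univ)
    fun i _ => coord_subgaussian i) (Fintype.card ι) using 1
  · ext ω
    rw [NNReal.coe_natCast, ← Fintype.expect_eq_sum_div_card, expect_sub_distrib,
      expect_const univ_nonempty, sampleMean]
  · rw [sum_const, card_univ, nsmul_eq_mul]
    field_simp

theorem hasSubgaussianMGF_uStatistic_of_injective [Nonempty κ] (D : Measure Z)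
    [IsProbabilityMeasure D] {a b : κ → ι} (hab : (Sum.elim a b).Injective)
    {G : Z × Z → ℝ} (hG : Measurable G) {l u : ℝ} (hGlu : ∀ q, G q ∈ Set.Icc l u) :
    HasSubgaussianMGF (fun ω : ι → Z => uStatistic G ω - ∫ q, G q ∂(D.prod D))
      ((‖u - l‖₊ / 2) ^ 2 / Fintype.card κ) (Measure.pi fun _ => D) := by
  classical
  have pairs_mean_subgaussian (σ : Equiv.Perm ι) : HasSubgaussianMGF
      (fun ω : ι → Z => sampleMean G (fun k => (ω (σ (a k)), ω (σ (b k)))) - ∫ q, G q ∂(D.prod D))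
      ((‖u - l‖₊ / 2) ^ 2 / Fintype.card κ) (Measure.pi fun _ => D) := by
    have permuted_pairs := measurePreserving_pairs D (a := σ ∘ a) (b := σ ∘ b) <| by
      rw [← Sum.comp_elim]
      exact σ.injective.comp hab
    exact hasSubgaussianMGF_comp (hasSubgaussianMGF_sampleMean (D.prod D) hG hGlu) permuted_pairs
  have ne (k : κ) : a k ≠ b k := fun h => Sum.inl_ne_inr (hab h)
  convert hasSubgaussianMGF_expect univ_nonempty fun σ _ => pairs_mean_subgaussian σ using 2 with ω
  rw [expect_sub_distrib, expect_const univ_nonempty, ← uStatistic_eq_expect_perm ne]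

theorem exists_injective_sumElim_half (ι : Type*) [Fintype ι] :
    ∃ a b : Fin (Fintype.card ι / 2) → ι, (Sum.elim a b).Injective := by
  obtain ⟨e⟩ := Function.Embedding.nonempty_of_card_le
    (α := Fin (Fintype.card ι / 2) ⊕ Fin (Fintype.card ι / 2)) (β := ι) <| by
      rw [Fintype.card_sum, Fintype.card_fin]
      omega
  exact ⟨e ∘ Sum.inl, e ∘ Sum.inr, by simpa using e.injective⟩

theorem hasSubgaussianMGF_uStatistic [Nontrivial ι] (D : Measure Z)
    [IsProbabilityMeasure D] {G : Z × Z → ℝ} (hG : Measurable G) {a b : ℝ}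
    (hGab : ∀ q, G q ∈ Set.Icc a b) :
    HasSubgaussianMGF (fun ω : ι → Z => uStatistic G ω - ∫ q, G q ∂(D.prod D))
      ((‖b - a‖₊ / 2) ^ 2 / (Fintype.card ι / 2 : ℕ)) (Measure.pi fun _ => D) := by
  obtain ⟨first, second, disjoint⟩ := exists_injective_sumElim_half ι
  have : Nonempty (Fin (Fintype.card ι / 2)) :=
    Fin.pos_iff_nonempty.mp (Nat.div_pos Fintype.one_lt_card two_pos)
  simpa using hasSubgaussianMGF_uStatistic_of_injective D disjoint hG hGab

theorem sub_nonneg_of_forall_mem_Icc {α : Type*} [Nonempty α] {f : α → ℝ} {a b : ℝ}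
    (hf : ∀ x, f x ∈ Set.Icc a b) : 0 ≤ b - a := by
  have ⟨x⟩ := ‹Nonempty α›
  exact sub_nonneg.mpr ((hf x).1.trans (hf x).2)

section Tails

variable {D : Measure Z} [IsProbabilityMeasure D] {a b : ℝ}

theorem measureReal_integral_add_lt_sampleMean_le [Nonempty ι] {g : Z → ℝ} (hg : Measurable g)
    (hgab : ∀ z, g z ∈ Set.Icc a b) (l : ℝ) :
    (Measure.pi fun _ : ι => D).real
      {ω | ∫ z, g z ∂D + (b - a) * √(l / (2 * Fintype.card ι)) < sampleMean g ω} ≤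
        Real.exp (-l) := by
  have : Nonempty Z := nonempty_of_isProbabilityMeasure D
  convert measureReal_mul_sqrt_lt_le_exp (sub_nonneg_of_forall_mem_Icc hgab) Fintype.card_ne_zero
    (hasSubgaussianMGF_sampleMean (ι := ι) D hg hgab) (l / (2 * Fintype.card ι)) using 2
  · simp only [lt_sub_iff_add_lt']
  · field_simp

theorem measureReal_sampleMean_add_lt_integral_le [Nonempty ι] {g : Z → ℝ} (hg : Measurable g)
    (hgab : ∀ z, g z ∈ Set.Icc a b) (l : ℝ) :
    (Measure.pi fun _ : ι => D).real
      {ω | sampleMean g ω + (b - a) * √(l / (2 * Fintype.card ι)) < ∫ z, g z ∂D} ≤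
        Real.exp (-l) := by
  convert measureReal_integral_add_lt_sampleMean_le (ι := ι) (D := D) hg.neg
    (fun z => ⟨neg_le_neg (hgab z).2, neg_le_neg (hgab z).1⟩) l using 2
  ext ω
  simp only [Set.mem_ofPred_eq, Pi.neg_apply, sampleMean_neg, integral_neg]
  constructor <;> intro h <;> linarith

theorem uStatistic_le_integral_add_of_card_le [Nontrivial ι] {G : Z × Z → ℝ}
    (hG : Measurable G) (hGab : ∀ q, G q ∈ Set.Icc a b) {l : ℝ} (hl : Fintype.card ι ≤ l)
    (ω : ι → Z) : uStatistic G ω ≤ ∫ q, G q ∂(D.prod D) + (b - a) * √(l / Fintype.card ι) := by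
  have : Nonempty (Z × Z) := nonempty_of_isProbabilityMeasure (D.prod D)
  have card_pos : (0 : ℝ) < Fintype.card ι := Nat.cast_pos.mpr Fintype.card_pos
  have le_integral : a ≤ ∫ q, G q ∂(D.prod D) :=
    ((convex_Icc a b).integral_mem isClosed_Icc (ae_of_all _ hGab)
      (.of_mem_Icc a b hG.aemeasurable (ae_of_all _ hGab))).1
  have range_le : b - a ≤ (b - a) * √(l / Fintype.card ι) :=
    le_mul_of_one_le_right (sub_nonneg_of_forall_mem_Icc hGab)
      (Real.one_le_sqrt.mpr ((one_le_div card_pos).mpr hl))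
  linarith [(uStatistic_mem_Icc hGab ω).2]

-- There are only `⌊n / 2⌋` disjoint pairs, and `2⌊n / 2⌋ ≥ n - 1` costs the factor `exp 1`.
theorem measureReal_integral_add_lt_uStatistic_le [Nontrivial ι] {G : Z × Z → ℝ}
    (hG : Measurable G) (hGab : ∀ q, G q ∈ Set.Icc a b) (l : ℝ) :
    (Measure.pi fun _ : ι => D).real
      {ω | ∫ q, G q ∂(D.prod D) + (b - a) * √(l / Fintype.card ι) < uStatistic G ω} ≤
        Real.exp (1 - l) := by
  have : Nonempty (Z × Z) := nonempty_of_isProbabilityMeasure (D.prod D)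
  have range_nonneg : 0 ≤ b - a := sub_nonneg_of_forall_mem_Icc hGab
  have card_pos : (0 : ℝ) < Fintype.card ι := Nat.cast_pos.mpr Fintype.card_pos
  rcases le_or_gt l 1 with hl | hl
  · exact measureReal_le_one.trans (Real.one_le_exp (by linarith))
  rcases le_or_gt (Fintype.card ι : ℝ) l with hnl | hnl
  · have tail_empty : {ω : ι → Z | ∫ q, G q ∂(D.prod D) + (b - a) * √(l / Fintype.card ι) <
        uStatistic G ω} = ∅ :=
      Set.eq_empty_of_forall_notMem fun ω =>
        (uStatistic_le_integral_add_of_card_le hG hGab hnl ω).not_gt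
    rw [tail_empty, measureReal_empty]
    exact Real.exp_nonneg _
  · have half_card_ne_zero : Fintype.card ι / 2 ≠ 0 :=
      (Nat.div_pos Fintype.one_lt_card two_pos).ne'
    have card_le : (Fintype.card ι : ℝ) ≤ 2 * (Fintype.card ι / 2 : ℕ) + 1 := by
      exact_mod_cast (by omega : Fintype.card ι ≤ 2 * (Fintype.card ι / 2) + 1)
    have exponent_le : l - 1 ≤ 2 * (Fintype.card ι / 2 : ℕ) * (l / Fintype.card ι) := by
      rw [← mul_div_assoc, le_div_iff₀ card_pos]
      nlinarith
    calc _ ≤ Real.exp (-(2 * (Fintype.card ι / 2 : ℕ) * (l / Fintype.card ι))) := by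
          simp only [← lt_sub_iff_add_lt']
          exact measureReal_mul_sqrt_lt_le_exp range_nonneg half_card_ne_zero
            (hasSubgaussianMGF_uStatistic D hG hGab) _
      _ ≤ Real.exp (1 - l) := Real.exp_le_exp.mpr (by linarith)

theorem measureReal_uStatistic_add_lt_integral_le [Nontrivial ι] {G : Z × Z → ℝ}
    (hG : Measurable G) (hGab : ∀ q, G q ∈ Set.Icc a b) (l : ℝ) :
    (Measure.pi fun _ : ι => D).real
      {ω | uStatistic G ω + (b - a) * √(l / Fintype.card ι) < ∫ q, G q ∂(D.prod D)} ≤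
        Real.exp (1 - l) := by
  convert measureReal_integral_add_lt_uStatistic_le (ι := ι) (D := D) hG.neg
    (fun q => ⟨neg_le_neg (hGab q).2, neg_le_neg (hGab q).1⟩) l using 2
  ext ω
  simp only [Set.mem_ofPred_eq, Pi.neg_apply, uStatistic_neg, integral_neg]
  constructor <;> intro h <;> linarith

end Tails

theorem le_integral_of_ae_le_sampleMean [Nonempty ι] {D : Measure Z} [IsProbabilityMeasure D]
    {g : Z → ℝ} (hg : Integrable g D) {c : ℝ}
    (hc : ∀ᵐ ω ∂(Measure.pi fun _ : ι => D), c ≤ sampleMean g ω) : c ≤ ∫ z, g z ∂D := by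
  have coords (i : ι) (_ : i ∈ univ) := measurePreserving_eval (fun _ : ι => D) i
  calc c = ∫ _ω : ι → Z, c ∂(Measure.pi fun _ => D) := by simp
    _ ≤ ∫ ω, sampleMean g ω ∂(Measure.pi fun _ => D) :=
        integral_mono_ae (integrable_const c) (integrable_expect_comp coords hg) hc
    _ = ∫ z, g z ∂D := integral_expect_comp univ_nonempty coords hg

theorem integral_le_of_ae_uStatistic_le [Nontrivial ι] {D : Measure Z}
    [IsProbabilityMeasure D] {G : Z × Z → ℝ} (hG : Integrable G (D.prod D)) {c : ℝ}
    (hc : ∀ᵐ ω ∂(Measure.pi fun _ : ι => D), uStatistic G ω ≤ c) :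
    ∫ q, G q ∂(D.prod D) ≤ c := by
  have pairs (p : ι × ι) (hp : p ∈ univ.offDiag) :=
    measurePreserving_pair D (mem_offDiag.mp hp).2.2
  calc ∫ q, G q ∂(D.prod D) = ∫ ω : ι → Z, uStatistic G ω ∂(Measure.pi fun _ => D) :=
        (integral_expect_comp offDiag_univ_nonempty pairs hG).symm
    _ ≤ ∫ _ω : ι → Z, c ∂(Measure.pi fun _ => D) :=
        integral_mono_ae (integrable_expect_comp pairs hG) (integrable_const c) hc
    _ = c := by simp

/-- The largest possible decrease of a ratio with nonnegative numerator at most `S` and denominator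
at least `b` when the numerator is lowered by `t` and the denominator raised by `u`. With `t` and
`u` the deviations of the switched and the original loss this is the constant `Q₁`. -/
noncomputable def ratioSlack (S b t u : ℝ) : ℝ := S / b - (S - t) / (b + u)

theorem ratioSlack_mono {s S o b t u : ℝ} (hs : 0 ≤ s) (hsS : s ≤ S) (hb : 0 < b) (hbo : b ≤ o)
    (ht : 0 ≤ t) (hu : 0 ≤ u) : ratioSlack s o t u ≤ ratioSlack S b t u := by
  have ho : 0 < o := hb.trans_le hbo
  have ratioSlack_eq (s : ℝ) {o : ℝ} (ho : 0 < o) :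
      ratioSlack s o t u = s / o * (u / (o + u)) + t / (o + u) := by
    rw [ratioSlack]
    field_simp
    ring
  have hS : 0 ≤ S := hs.trans hsS
  rw [ratioSlack_eq s ho, ratioSlack_eq S hb]
  gcongr

theorem div_le_div_add_ratioSlack {s o s' o' S b t u : ℝ} (hs : 0 ≤ s) (hsS : s ≤ S) (hb : 0 < b)
    (hbo : b ≤ o) (ht : 0 ≤ t) (hu : 0 ≤ u) (hs' : 0 ≤ s') (ho' : 0 < o') (hss' : s ≤ s' + t)
    (hoo' : o' ≤ o + u) : s / o ≤ s' / o' + ratioSlack S b t u := by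
  have perturbed_le : (s - t) / (o + u) ≤ s' / o' := by
    rw [div_le_div_iff₀ (ho'.trans_le hoo') ho']
    calc (s - t) * o' ≤ s' * o' := by gcongr; linarith
      _ ≤ s' * (o + u) := by gcongr
  calc s / o = (s - t) / (o + u) + ratioSlack s o t u := (add_sub_cancel _ _).symm
    _ ≤ s' / o' + ratioSlack S b t u :=
        add_le_add perturbed_le (ratioSlack_mono hs hsS hb hbo ht hu)

theorem measureReal_le_add_of_ae_imp {Ω : Type*} [MeasurableSpace Ω] {μ : Measure Ω}
    [IsFiniteMeasure μ] {p p₁ p₂ : Ω → Prop} {x₁ x₂ : ℝ} (h₁ : μ.real {ω | p₁ ω} ≤ x₁)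
    (h₂ : μ.real {ω | p₂ ω} ≤ x₂) (h : ∀ᵐ ω ∂μ, ¬p₁ ω → ¬p₂ ω → ¬p ω) :
    μ.real {ω | p ω} ≤ x₁ + x₂ := by
  have covered : {ω | p ω} ≤ᵐ[μ] ({ω | p₁ ω} ∪ {ω | p₂ ω} : Set Ω) := by
    filter_upwards [h] with ω hω hp
    by_contra hnot
    exact hω (fun h => hnot (.inl h)) (fun h => hnot (.inr h)) hp
  calc μ.real {ω | p ω} ≤ μ.real ({ω | p₁ ω} ∪ {ω | p₂ ω}) :=
        ENNReal.toReal_mono (measure_ne_top _ _) (measure_mono_ae covered)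
    _ ≤ μ.real {ω | p₁ ω} + μ.real {ω | p₂ ω} := measureReal_union_le _ _
    _ ≤ x₁ + x₂ := add_le_add h₁ h₂

section RatioConcentration

variable {D : Measure Z} [IsProbabilityMeasure D] [Nontrivial ι] {g : Z → ℝ}
  {G : Z × Z → ℝ} {B S b : ℝ}

theorem measureReal_ratio_add_ratioSlack_lt_ratio_integral_le (hg : Measurable g)
    (hgB : ∀ z, g z ∈ Set.Icc 0 B) (hG : Measurable G) (hGB : ∀ q, G q ∈ Set.Icc 0 B) (hb : 0 < b)
    (hbS : ∀ᵐ ω ∂(Measure.pi fun _ : ι => D), b ≤ sampleMean g ω ∧ uStatistic G ω ≤ S) (l : ℝ) :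
    (Measure.pi fun _ : ι => D).real
      {ω | uStatistic G ω / sampleMean g ω +
          ratioSlack S b (B * √(l / Fintype.card ι)) (B * √(l / (2 * Fintype.card ι))) <
        (∫ q, G q ∂(D.prod D)) / ∫ z, g z ∂D} ≤ Real.exp (-l) + Real.exp (1 - l) := by
  have : Nonempty Z := nonempty_of_isProbabilityMeasure D
  have B_nonneg : 0 ≤ B := by simpa using sub_nonneg_of_forall_mem_Icc hgB
  have le_integral_g : b ≤ ∫ z, g z ∂D :=
    le_integral_of_ae_le_sampleMean (.of_mem_Icc 0 B hg.aemeasurable (ae_of_all _ hgB))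
      (hbS.mono fun _ h => h.1)
  have integral_G_le : ∫ q, G q ∂(D.prod D) ≤ S :=
    integral_le_of_ae_uStatistic_le (.of_mem_Icc 0 B hG.aemeasurable (ae_of_all _ hGB))
      (hbS.mono fun _ h => h.2)
  refine measureReal_le_add_of_ae_imp (measureReal_integral_add_lt_sampleMean_le hg hgB l)
    (measureReal_uStatistic_add_lt_integral_le hG hGB l) ?_
  filter_upwards [hbS] with ω hω orig switch
  rw [sub_zero] at orig switch
  exact not_lt.mpr <| div_le_div_add_ratioSlack (integral_nonneg fun q => (hGB q).1) integral_G_le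
    hb le_integral_g (by positivity) (by positivity) (uStatistic_mem_Icc hGB ω).1
    (hb.trans_le hω.1) (not_lt.mp switch) (not_lt.mp orig)

theorem measureReal_ratio_integral_add_ratioSlack_lt_ratio_le (hg : Measurable g)
    (hgB : ∀ z, g z ∈ Set.Icc 0 B) (hG : Measurable G) (hGB : ∀ q, G q ∈ Set.Icc 0 B) (hb : 0 < b)
    (hbS : ∀ᵐ ω ∂(Measure.pi fun _ : ι => D), b ≤ sampleMean g ω ∧ uStatistic G ω ≤ S) (l : ℝ) :
    (Measure.pi fun _ : ι => D).real
      {ω | (∫ q, G q ∂(D.prod D)) / ∫ z, g z ∂D +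
          ratioSlack S b (B * √(l / Fintype.card ι)) (B * √(l / (2 * Fintype.card ι))) <
        uStatistic G ω / sampleMean g ω} ≤ Real.exp (-l) + Real.exp (1 - l) := by
  have : Nonempty Z := nonempty_of_isProbabilityMeasure D
  have B_nonneg : 0 ≤ B := by simpa using sub_nonneg_of_forall_mem_Icc hgB
  have le_integral_g : b ≤ ∫ z, g z ∂D :=
    le_integral_of_ae_le_sampleMean (.of_mem_Icc 0 B hg.aemeasurable (ae_of_all _ hgB))
      (hbS.mono fun _ h => h.1)
  refine measureReal_le_add_of_ae_imp (measureReal_sampleMean_add_lt_integral_le hg hgB l)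
    (measureReal_integral_add_lt_uStatistic_le hG hGB l) ?_
  filter_upwards [hbS] with ω hω orig switch
  rw [sub_zero] at orig switch
  exact not_lt.mpr <| div_le_div_add_ratioSlack (uStatistic_mem_Icc hGB ω).1 hω.2 hb hω.1
    (by positivity) (by positivity) (integral_nonneg fun q => (hGB q).1) (hb.trans_le le_integral_g)
    (not_lt.mp switch) (not_lt.mp orig)

end RatioConcentration

theorem measureReal_sampleMean_add_lt_sampleMean_le {D : Measure Z} [IsProbabilityMeasure D]
    [Nonempty ι] {g r : Z → ℝ} (hg : Measurable g) (hr : Measurable r) (hgi : Integrable g D)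
    {B ε : ℝ} (hgr : ∀ z, |g z - r z| ≤ B) (hε : ∫ z, g z ∂D ≤ ∫ z, r z ∂D + ε) (l : ℝ) :
    (Measure.pi fun _ : ι => D).real
      {ω | sampleMean r ω + (ε + 2 * B * √(l / (2 * Fintype.card ι))) < sampleMean g ω} ≤
        Real.exp (-l) := by
  have sub_mem_Icc (z : Z) : (g - r) z ∈ Set.Icc (-B) B := abs_le.mp (hgr z)
  have hri : Integrable r D := by
    simpa using hgi.sub (.of_mem_Icc (-B) B (hg.sub hr).aemeasurable (ae_of_all _ sub_mem_Icc))
  refine (measureReal_mono fun ω hω => ?_).trans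
    (measureReal_integral_add_lt_sampleMean_le (hg.sub hr) sub_mem_Icc l)
  simp only [Set.mem_ofPred_eq, sampleMean_sub, integral_sub' hgi hri] at hω ⊢
  linarith

-- The three terms are `δ / 3`, `δ / 6` and `exp 1 * δ / 6`.
theorem exp_neg_log_add_le {δ : ℝ} (hδ : 0 < δ) :
    Real.exp (-Real.log (3 / δ)) + (Real.exp (-Real.log (6 / δ)) + Real.exp (1 - Real.log (6 / δ)))
      ≤ δ := by
  have exp_neg_log (c : ℝ) (hc : 0 < c) : Real.exp (-Real.log (c / δ)) = δ / c := by
    rw [Real.exp_neg, Real.exp_log (by positivity), inv_div]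
  rw [sub_eq_add_neg, Real.exp_add, exp_neg_log 3 three_pos, exp_neg_log 6 (by norm_num)]
  nlinarith [Real.exp_one_lt_three]

section RashomonSet

variable {D : Measure Z} [IsProbabilityMeasure D] [Nontrivial ι] {g r : Z → ℝ}
  {G : Z × Z → ℝ} {B B' S b ε δ : ℝ} {M : (ι → Z) → ℝ}

theorem measure_add_ratioSlack_lt_ratio_integral_le (hg : Measurable g)
    (hgB : ∀ z, g z ∈ Set.Icc 0 B) (hG : Measurable G) (hGB : ∀ q, G q ∈ Set.Icc 0 B) (hb : 0 < b)
    (hbS : ∀ᵐ ω ∂(Measure.pi fun _ : ι => D), b ≤ sampleMean g ω ∧ uStatistic G ω ≤ S)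
    (hr : Measurable r) (hgr : ∀ z, |g z - r z| ≤ B')
    (hε : ∫ z, g z ∂D ≤ ∫ z, r z ∂D + ε) (hδ : 0 < δ)
    (hM : ∀ ω, sampleMean g ω ≤
        sampleMean r ω + (ε + 2 * B' * √(Real.log (3 / δ) / (2 * Fintype.card ι))) →
      uStatistic G ω / sampleMean g ω ≤ M ω) :
    (Measure.pi fun _ => D) {ω | M ω + ratioSlack S b (B * √(Real.log (6 / δ) / Fintype.card ι))
        (B * √(Real.log (6 / δ) / (2 * Fintype.card ι))) <
      (∫ q, G q ∂(D.prod D)) / ∫ z, g z ∂D} ≤ ENNReal.ofReal δ := by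
  rw [← ofReal_measureReal]
  refine ENNReal.ofReal_le_ofReal (le_trans ?_ (exp_neg_log_add_le hδ))
  refine measureReal_le_add_of_ae_imp
    (measureReal_sampleMean_add_lt_sampleMean_le hg hr
      (.of_mem_Icc 0 B hg.aemeasurable (ae_of_all _ hgB)) hgr hε _)
    (measureReal_ratio_add_ratioSlack_lt_ratio_integral_le hg hgB hG hGB hb hbS _)
    (ae_of_all _ fun ω rashomon ratio => ?_)
  linarith [hM ω (not_lt.mp rashomon)]

theorem measure_ratio_integral_lt_sub_ratioSlack_le (hg : Measurable g)
    (hgB : ∀ z, g z ∈ Set.Icc 0 B) (hG : Measurable G) (hGB : ∀ q, G q ∈ Set.Icc 0 B) (hb : 0 < b)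
    (hbS : ∀ᵐ ω ∂(Measure.pi fun _ : ι => D), b ≤ sampleMean g ω ∧ uStatistic G ω ≤ S)
    (hr : Measurable r) (hgr : ∀ z, |g z - r z| ≤ B')
    (hε : ∫ z, g z ∂D ≤ ∫ z, r z ∂D + ε) (hδ : 0 < δ)
    (hM : ∀ ω, sampleMean g ω ≤
        sampleMean r ω + (ε + 2 * B' * √(Real.log (3 / δ) / (2 * Fintype.card ι))) →
      M ω ≤ uStatistic G ω / sampleMean g ω) :
    (Measure.pi fun _ => D) {ω | (∫ q, G q ∂(D.prod D)) / ∫ z, g z ∂D <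
      M ω - ratioSlack S b (B * √(Real.log (6 / δ) / Fintype.card ι))
        (B * √(Real.log (6 / δ) / (2 * Fintype.card ι)))} ≤ ENNReal.ofReal δ := by
  rw [← ofReal_measureReal]
  refine ENNReal.ofReal_le_ofReal (le_trans ?_ (exp_neg_log_add_le hδ))
  refine measureReal_le_add_of_ae_imp
    (measureReal_sampleMean_add_lt_sampleMean_le hg hr
      (.of_mem_Icc 0 B hg.aemeasurable (ae_of_all _ hgB)) hgr hε _)
    (measureReal_ratio_integral_add_ratioSlack_lt_ratio_le hg hgB hG hGB hb hbS _)
    (ae_of_all _ fun ω rashomon ratio => ?_)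
  linarith [hM ω (not_lt.mp rashomon)]

end RashomonSet

end

/-- Theorem 3 (conservative finite-sample bounds for model class reliance):
with probability at least `1 − δ`, `MCR₊(ε) ≤ MCR̂₊(ε₁) + Q₁`, and with
probability at least `1 − δ`, `MCR₋(ε) ≥ MCR̂₋(ε₁) − Q₁`, where
`ε₁ = ε + 2B_ref√(log(3/δ)/(2n))` and
`Q₁ = B_switch/b_orig − (B_switch − B_ind√(log(6/δ)/n))/(b_orig + B_ind√(log(6/δ)/(2n)))`. -/
theorem stmt_3 {𝒴 𝒳1 𝒳2 : Type*}
    [MeasurableSpace 𝒴] [MeasurableSpace 𝒳1] [MeasurableSpace 𝒳2]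
    (D : Measure (𝒴 × 𝒳1 × 𝒳2)) [IsProbabilityMeasure D]
    (F : Set ((𝒳1 × 𝒳2) → 𝒴))
    (L : ((𝒳1 × 𝒳2) → 𝒴) → (𝒴 × 𝒳1 × 𝒳2) → ℝ)
    (hL : ∀ f z, 0 ≤ L f z)
    (hLmeas : ∀ f ∈ F, Measurable (L f))
    (fref : (𝒳1 × 𝒳2) → 𝒴) (hfref : fref ∈ F)
    (n : ℕ) (hn : 2 ≤ n)
    (Bind Bref borig Bswitch : ℝ) (hborig : 0 < borig)
    (ε δ : ℝ) (hε : 0 ≤ ε) (hδ : δ ∈ Set.Ioo (0 : ℝ) 1)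
    -- population quantities
    (eorig eswitch : ((𝒳1 × 𝒳2) → 𝒴) → ℝ)
    (heorig : ∀ f, eorig f = ∫ z, L f z ∂D)
    (heswitch : ∀ f, eswitch f = ∫ q, L f (q.2.1, q.1.2.1, q.2.2.2) ∂(D.prod D))
    (MR : ((𝒳1 × 𝒳2) → 𝒴) → ℝ) (hMR : ∀ f, MR f = eswitch f / eorig f)
    (R : ℝ → Set ((𝒳1 × 𝒳2) → 𝒴))
    (hR : ∀ e, R e = insert fref {f ∈ F | eorig f ≤ eorig fref + e})
    -- empirical quantities, over the i.i.d. sample measure `P = Dⁿ`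
    (P : Measure (Fin n → 𝒴 × 𝒳1 × 𝒳2)) (hP : P = Measure.pi fun _ => D)
    (ehatorig ehatswitch : ((𝒳1 × 𝒳2) → 𝒴) → (Fin n → 𝒴 × 𝒳1 × 𝒳2) → ℝ)
    (hehatorig : ∀ f ω, ehatorig f ω = (∑ i, L f (ω i)) / n)
    (hehatswitch : ∀ f ω, ehatswitch f ω =
      (∑ i, ∑ j ∈ Finset.univ.erase i, L f ((ω j).1, (ω i).2.1, (ω j).2.2)) /
        ((n : ℝ) * ((n : ℝ) - 1)))
    (MRhat : ((𝒳1 × 𝒳2) → 𝒴) → (Fin n → 𝒴 × 𝒳1 × 𝒳2) → ℝ)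
    (hMRhat : ∀ f ω, MRhat f ω = ehatswitch f ω / ehatorig f ω)
    (Rhat : ℝ → (Fin n → 𝒴 × 𝒳1 × 𝒳2) → Set ((𝒳1 × 𝒳2) → 𝒴))
    (hRhat : ∀ e ω, Rhat e ω =
      insert fref {f ∈ F | ehatorig f ω ≤ ehatorig fref ω + e})
    -- `f₊,ε` and `f₋,ε` attain the highest and lowest model reliance on `R(ε)`
    (fplus fminus : (𝒳1 × 𝒳2) → 𝒴)
    (hfplus : fplus ∈ R ε ∧ ∀ f ∈ R ε, MR f ≤ MR fplus)
    (hfminus : fminus ∈ R ε ∧ ∀ f ∈ R ε, MR fminus ≤ MR f)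
    -- the empirical MCR values `MCR̂₊(e)`, `MCR̂₋(e)`, assumed to be attained
    (MCRhatP MCRhatM : ℝ → (Fin n → 𝒴 × 𝒳1 × 𝒳2) → ℝ)
    (hMCRhatP : ∀ e ω, IsGreatest ((fun f => MRhat f ω) '' Rhat e ω) (MCRhatP e ω))
    (hMCRhatM : ∀ e ω, IsLeast ((fun f => MRhat f ω) '' Rhat e ω) (MCRhatM e ω))
    -- Assumptions 1, 2, 3 for `f₊,ε` and `f₋,ε`
    (hA1p : ∀ z, L fplus z ≤ Bind) (hA1m : ∀ z, L fminus z ≤ Bind)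
    (hA2p : ∀ z, |L fplus z - L fref z| ≤ Bref)
    (hA2m : ∀ z, |L fminus z - L fref z| ≤ Bref)
    (hA3p : ∀ᵐ ω ∂P, borig ≤ ehatorig fplus ω ∧ ehatswitch fplus ω ≤ Bswitch)
    (hA3m : ∀ᵐ ω ∂P, borig ≤ ehatorig fminus ω ∧ ehatswitch fminus ω ≤ Bswitch)
    -- `ε₁` and `Q₁`
    (ε₁ Q₁ : ℝ)
    (hε₁ : ε₁ = ε + 2 * Bref * Real.sqrt (Real.log (3 / δ) / (2 * n)))
    (hQ₁ : Q₁ = Bswitch / borig -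
      (Bswitch - Bind * Real.sqrt (Real.log (6 / δ) / n)) /
        (borig + Bind * Real.sqrt (Real.log (6 / δ) / (2 * n)))) :
    P {ω | MCRhatP ε₁ ω + Q₁ < MR fplus} ≤ ENNReal.ofReal δ ∧
    P {ω | MR fminus < MCRhatM ε₁ ω - Q₁} ≤ ENNReal.ofReal δ := by
  subst hP hQ₁ hε₁
  have : Nontrivial (Fin n) := Fin.nontrivial_iff_two_le.mpr hn
  have ehatorig_eq f ω : ehatorig f ω = sampleMean (L f) ω := by
    rw [hehatorig, sampleMean, Fintype.expect_eq_sum_div_card, Fintype.card_fin]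
  have ehatswitch_eq f ω :
      ehatswitch f ω = uStatistic (fun q => L f (q.2.1, q.1.2.1, q.2.2.2)) ω := by
    rw [hehatswitch, uStatistic_eq_sum_div, Fintype.card_fin]
  have mem_R {f} (hf : f ∈ R ε) : f ∈ F ∧ eorig f ≤ eorig fref + ε := by
    rw [hR] at hf
    rcases hf with rfl | hf
    · exact ⟨hfref, le_add_of_nonneg_right hε⟩
    · exact hf
  obtain ⟨fplus_mem, fplus_le⟩ := mem_R hfplus.1
  obtain ⟨fminus_mem, fminus_le⟩ := mem_R hfminus.1
  simp only [hMR, heorig, heswitch, hMRhat, hRhat, ehatorig_eq, ehatswitch_eq] at *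
  have upper := measure_add_ratioSlack_lt_ratio_integral_le (hLmeas _ fplus_mem)
    (fun z => ⟨hL _ z, hA1p z⟩) ((hLmeas _ fplus_mem).comp (by fun_prop))
    (fun _ => ⟨hL _ _, hA1p _⟩) hborig hA3p (hLmeas _ hfref) hA2p fplus_le hδ.1
    fun ω h => (hMCRhatP _ ω).2 ⟨fplus, .inr ⟨fplus_mem, h⟩, rfl⟩
  have lower := measure_ratio_integral_lt_sub_ratioSlack_le (hLmeas _ fminus_mem)
    (fun z => ⟨hL _ z, hA1m z⟩) ((hLmeas _ fminus_mem).comp (by fun_prop))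
    (fun _ => ⟨hL _ _, hA1m _⟩) hborig hA3m (hLmeas _ hfref) hA2m fminus_le hδ.1
    fun ω h => (hMCRhatM _ ω).2 ⟨fminus, .inr ⟨fminus_mem, h⟩, rfl⟩
  rw [Fintype.card_fin] at upper lower
  exact ⟨upper, lower⟩
end

section
/- If Assumptions 1 and 3 hold for every f ∈ ℱ, then for any r > 0 and δ ∈ (0,1), P( sup_{f∈ℱ} | MR̂(f) − MR(f) | > q(δ, r, n) ) ≤ δ. -/
open MeasureTheory

/-!
The population law and an empirical law are both within `r` of one covering element, chosen for
their mixture, so a uniform deviation bound over the class reduces to a union bound over the cover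
with margin `2 r`. The empirical switched loss averages dependent terms, each reading two sample
points; weighting every pair by `1 / (2 (n - 1))`, so that the weights at each sample point sum to
`1`, Finner's inequality bounds its moment generating function as if it averaged `n / 2` independent
terms. The bounds on the empirical losses hold almost surely for each model separately; rounding the
empirical losses of a cover leaves countably many cases, which makes them hold for all models at
once. Finally `(s, o) ↦ s / o - (s - A) / (o + C)` increases in `s` and decreases in `o`, so the
error of the ratio is largest at `s = B_switch`, `o = b_orig`.
-/

open ProbabilityTheory
open scoped ENNReal NNReal

section Finner

variable {ι E : Type*} {X : ι → Type*} [∀ i, MeasurableSpace (X i)] [Fintype E]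

theorem lintegral_prod_rpow_le_of_const_off {α : Type*} [MeasurableSpace α]
    (μ : Measure α) [IsProbabilityMeasure μ] (T : Finset E) {f : E → α → ℝ≥0∞} {p : E → ℝ≥0}
    (hf : ∀ e, AEMeasurable (f e) μ) (hp : ∑ e ∈ T, p e = 1)
    (hconst : ∀ e ∉ T, ∀ t u, f e t = f e u) :
    ∫⁻ t, ∏ e, f e t ^ (p e : ℝ) ∂μ ≤ ∏ e, (∫⁻ t, f e t ∂μ) ^ (p e : ℝ) := by
  classical
  have hmean : ∀ e ∉ T, ∀ t, f e t = ∫⁻ u, f e u ∂μ := fun e he t => by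
    simp [hconst e he _ t]
  have hsplit (t : α) : ∏ e, f e t ^ (p e : ℝ) =
      (∏ e ∈ T, f e t ^ (p e : ℝ)) * ∏ e ∈ Tᶜ, (∫⁻ u, f e u ∂μ) ^ (p e : ℝ) := by
    rw [← Finset.prod_mul_prod_compl T]
    congr 1
    exact Finset.prod_congr rfl fun e he => by rw [← hmean e (Finset.mem_compl.1 he) t]
  simp_rw [hsplit]
  rw [lintegral_mul_const'' _ (Finset.aemeasurable_fun_prod _ fun e _ => (hf e).pow_const _),
    ← Finset.prod_mul_prod_compl T]
  gcongr
  exact ENNReal.lintegral_prod_norm_pow_le T (fun e _ => hf e) (mod_cast hp)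
    fun e _ => (p e).coe_nonneg

variable [DecidableEq ι] {μ : ∀ i, Measure (X i)} [∀ i, IsProbabilityMeasure (μ i)]
  {S : E → Finset ι} {p : E → ℝ≥0}

theorem lmarginal_prod_rpow_le_of_dependsOn (hp : ∀ i, ∑ e with i ∈ S e, p e = 1)
    (s : Finset ι) {h : E → (∀ i, X i) → ℝ≥0∞} (hm : ∀ e, Measurable (h e))
    (hdep : ∀ e, DependsOn (h e) (S e)) (x : ∀ i, X i) :
    (∫⋯∫⁻_s, (fun x => ∏ e, h e x ^ (p e : ℝ)) ∂μ) x ≤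
      ∏ e, ((∫⋯∫⁻_s, h e ∂μ) x) ^ (p e : ℝ) := by
  classical
  induction s using Finset.induction generalizing h with
  | empty => simp
  | insert i s hi ih =>
    have hupd : Measurable fun q : (∀ i, X i) × X i => Function.update q.1 i q.2 :=
      measurable_update'
    simp only [lmarginal_insert' _ (hm _) hi]
    rw [lmarginal_insert' _ (by fun_prop) hi]
    refine (lmarginal_mono (fun y => ?_) x).trans (ih (fun e => ?_) fun e y z hyz => ?_)
    · refine lintegral_prod_rpow_le_of_const_off (μ i) {e | i ∈ S e}
        (fun e => ((hm e).comp (measurable_update y)).aemeasurable) (hp i) fun e he t u => ?_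
      refine hdep e fun j hj => ?_
      have hji : j ≠ i := fun hji => he (by simpa [hji] using hj)
      simp [hji]
    · exact ((hm e).comp hupd).lintegral_prod_right'
    · refine lintegral_congr fun t => hdep e fun j hj => ?_
      rcases eq_or_ne j i with rfl | hji
      · simp
      · simpa [hji] using hyz j hj

/-- **Finner's inequality** -/
theorem lintegral_pi_prod_rpow_le_of_dependsOn [Fintype ι]
    (hp : ∀ i, ∑ e with i ∈ S e, p e = 1) {h : E → (∀ i, X i) → ℝ≥0∞}
    (hm : ∀ e, Measurable (h e)) (hdep : ∀ e, DependsOn (h e) (S e)) :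
    ∫⁻ x, ∏ e, h e x ^ (p e : ℝ) ∂Measure.pi μ ≤
      ∏ e, (∫⁻ x, h e x ∂Measure.pi μ) ^ (p e : ℝ) := by
  obtain ⟨x⟩ := (Measure.pi μ).nonempty_of_neZero
  simpa only [lmarginal_univ] using
    lmarginal_prod_rpow_le_of_dependsOn (μ := μ) hp Finset.univ hm hdep x

end Finner

section Subgaussian

theorem hasSubgaussianMGF_iff_lintegral_le {Ω : Type*} [MeasurableSpace Ω] {P : Measure Ω}
    {Y : Ω → ℝ} {c : ℝ≥0} (hY : AEMeasurable Y P) :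
    HasSubgaussianMGF Y c P ↔ ∀ t, ∫⁻ ω, ENNReal.ofReal (Real.exp (t * Y ω)) ∂P ≤
      ENNReal.ofReal (Real.exp (c * t ^ 2 / 2)) := by
  have hmeas (t : ℝ) : AEStronglyMeasurable (fun ω => Real.exp (t * Y ω)) P :=
    (hY.const_mul t).exp.aestronglyMeasurable
  have hpos (t : ℝ) : 0 ≤ᵐ[P] fun ω => Real.exp (t * Y ω) := ae_of_all _ fun _ => by positivity
  refine ⟨fun h t => ?_, fun h => ⟨fun t => ?_, fun t => ?_⟩⟩
  · rw [← ofReal_integral_eq_lintegral_ofReal (h.integrable_exp_mul t) (hpos t)]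
    exact ENNReal.ofReal_le_ofReal (h.mgf_le t)
  · exact (lintegral_ofReal_ne_top_iff_integrable (hmeas t) (hpos t)).1
      ((h t).trans_lt ENNReal.ofReal_lt_top).ne
  · rw [mgf, integral_eq_lintegral_of_nonneg_ae (hpos t) (hmeas t)]
    exact ENNReal.toReal_le_of_le_ofReal (by positivity) (h t)

theorem measure_le_abs_le_of_hasSubgaussianMGF {Ω : Type*} [MeasurableSpace Ω] {P : Measure Ω}
    [IsFiniteMeasure P] {Y : Ω → ℝ} {c : ℝ≥0} (hY : HasSubgaussianMGF Y c P) {ε : ℝ}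
    (hε : 0 ≤ ε) :
    P {ω | ε ≤ |Y ω|} ≤ ENNReal.ofReal (2 * Real.exp (-ε ^ 2 / (2 * c))) := by
  rw [← ofReal_measureReal, two_mul]
  refine ENNReal.ofReal_le_ofReal ?_
  simp only [le_abs, Set.ofPred_or]
  exact (measureReal_union_le _ _).trans
    (add_le_add (hY.measure_ge_le hε) (hY.neg.measure_ge_le hε))

variable {ι E : Type*} {X : ι → Type*} [∀ i, MeasurableSpace (X i)] [Fintype E]
  [DecidableEq ι] [Fintype ι] {μ : ∀ i, Measure (X i)} [∀ i, IsProbabilityMeasure (μ i)]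
  {S : E → Finset ι} {Y : E → (∀ i, X i) → ℝ}

theorem hasSubgaussianMGF_sum_mul_of_dependsOn {p c : E → ℝ≥0}
    (hp : ∀ i, ∑ e with i ∈ S e, p e = 1) (hm : ∀ e, Measurable (Y e))
    (hdep : ∀ e, DependsOn (Y e) (S e))
    (hY : ∀ e, HasSubgaussianMGF (Y e) (c e) (Measure.pi μ)) :
    HasSubgaussianMGF (fun x => ∑ e, p e * Y e x) (∑ e, p e * c e) (Measure.pi μ) := by
  refine (hasSubgaussianMGF_iff_lintegral_le (by fun_prop)).2 fun t => ?_
  have hexp_sum (y : E → ℝ) : ENNReal.ofReal (Real.exp (∑ e, y e * p e)) =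
      ∏ e, ENNReal.ofReal (Real.exp (y e)) ^ (p e : ℝ) := by
    rw [Real.exp_sum, ENNReal.ofReal_prod_of_nonneg fun _ _ => by positivity]
    exact Finset.prod_congr rfl fun e _ => by
      rw [Real.exp_mul, ENNReal.ofReal_rpow_of_pos (Real.exp_pos _)]
  calc ∫⁻ x, ENNReal.ofReal (Real.exp (t * ∑ e, p e * Y e x)) ∂Measure.pi μ
      = ∫⁻ x, ∏ e, ENNReal.ofReal (Real.exp (t * Y e x)) ^ (p e : ℝ) ∂Measure.pi μ := by
        simp_rw [← hexp_sum, Finset.mul_sum, mul_left_comm t, mul_comm (p _ : ℝ)]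
    _ ≤ ∏ e, (∫⁻ x, ENNReal.ofReal (Real.exp (t * Y e x)) ∂Measure.pi μ) ^ (p e : ℝ) :=
        lintegral_pi_prod_rpow_le_of_dependsOn hp (fun e => by fun_prop) fun e x y hxy => by
          rw [hdep e hxy]
    _ ≤ ∏ e, ENNReal.ofReal (Real.exp (c e * t ^ 2 / 2)) ^ (p e : ℝ) := by
        gcongr with e
        exact (hasSubgaussianMGF_iff_lintegral_le (hm e).aemeasurable).1 (hY e) t
    _ = ENNReal.ofReal (Real.exp ((∑ e, p e * c e : ℝ≥0) * t ^ 2 / 2)) := by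
        rw [← hexp_sum]
        push_cast
        rw [Finset.sum_mul, Finset.sum_div]
        congr! 3 with e
        ring

theorem hasSubgaussianMGF_average_of_dependsOn {c : ℝ≥0} {d : ℕ} (hd : d ≠ 0)
    (hS : ∀ i, Finset.card {e | i ∈ S e} = d) (hm : ∀ e, Measurable (Y e))
    (hdep : ∀ e, DependsOn (Y e) (S e)) (hY : ∀ e, HasSubgaussianMGF (Y e) c (Measure.pi μ)) :
    HasSubgaussianMGF (fun x => (∑ e, Y e x) / Fintype.card E) (d / Fintype.card E * c)
      (Measure.pi μ) := by
  have hsum := hasSubgaussianMGF_sum_mul_of_dependsOn (p := fun _ => (d : ℝ≥0)⁻¹)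
    (fun i => by simp [hS, hd]) hm hdep hY
  convert hsum.const_mul (d / Fintype.card E) using 1
  · ext x
    rw [← Finset.mul_sum]
    push_cast
    field_simp
  · refine NNReal.eq ?_
    simp only [Finset.sum_const, Finset.card_univ, nsmul_eq_mul]
    change ((_ : ℝ≥0) : ℝ) =
      (d / Fintype.card E : ℝ) ^ 2 * ((Fintype.card E * ((d : ℝ≥0)⁻¹ * c) : ℝ≥0) : ℝ)
    push_cast
    field_simp

end Subgaussian

/-- A measurable loss function taking its values in `[0, B]` (Assumption 1). -/
structure IsBoundedLoss {Z : Type*} [MeasurableSpace Z] (B : ℝ) (ℓ : Z → ℝ) : Prop where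
  measurable : Measurable ℓ
  mem_Icc : ∀ z, ℓ z ∈ Set.Icc 0 B

/-- The uniform distribution on the points of a finite sample, counted with multiplicity. -/
noncomputable def empiricalMeasure {E Z : Type*} [Fintype E] [MeasurableSpace Z] (x : E → Z) :
    Measure Z :=
  (Fintype.card E : ℝ≥0∞)⁻¹ • ∑ e, Measure.dirac (x e)

/-- `G` is an `r`-margin-expectation-cover of the class `F` of models with losses `L`: for every
distribution, the loss of each model of `F` is within `r` in mean of the loss of a model of `G`. -/
structure IsMarginExpectationCover {H Z : Type*} [MeasurableSpace Z] (L : H → Z → ℝ) (B r : ℝ)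
    (F : Set H) (G : Finset H) : Prop where
  isBoundedLoss : ∀ g ∈ G, IsBoundedLoss B (L g)
  exists_integral_le : ∀ f ∈ F, ∀ μ : Measure Z, IsProbabilityMeasure μ →
    ∃ g ∈ G, ∫ z, |L f z - L g z| ∂μ ≤ r

theorem IsBoundedLoss.integrable {Z : Type*} [MeasurableSpace Z] {μ : Measure Z}
    [IsFiniteMeasure μ] {B : ℝ} {ℓ : Z → ℝ} (hℓ : IsBoundedLoss B ℓ) : Integrable ℓ μ :=
  .of_mem_Icc 0 B hℓ.measurable.aemeasurable (ae_of_all _ hℓ.mem_Icc)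

section EmpiricalMeasure

variable {E Z Ω : Type*} [Fintype E] [MeasurableSpace Z] [MeasurableSpace Ω]

instance [Nonempty E] (x : E → Z) : IsProbabilityMeasure (empiricalMeasure x) :=
  ⟨by simp [empiricalMeasure, ENNReal.inv_mul_cancel]⟩

theorem integral_empiricalMeasure {φ : Z → ℝ} (hφ : StronglyMeasurable φ) (x : E → Z) :
    ∫ z, φ z ∂empiricalMeasure x = (∑ e, φ (x e)) / Fintype.card E := by
  rw [empiricalMeasure, integral_smul_measure,
    integral_finsetSum_measure fun e _ => integrable_dirac' hφ (by simp)]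
  simp [integral_dirac' _ _ hφ, div_eq_inv_mul]

theorem integral_integral_empiricalMeasure [Nonempty E] {P : Measure Ω} {ν : Measure Z}
    {a : E → Ω → Z} (ha : ∀ e, MeasurePreserving (a e) P ν) {φ : Z → ℝ}
    (hφ : StronglyMeasurable φ) (hint : Integrable φ ν) :
    Integrable (fun ω => ∫ z, φ z ∂empiricalMeasure fun e => a e ω) P ∧
      ∫ ω, ∫ z, φ z ∂(empiricalMeasure fun e => a e ω) ∂P = ∫ z, φ z ∂ν := by
  have hcomp (e : E) : Integrable (fun ω => φ (a e ω)) P :=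
    (ha e).integrable_comp_of_integrable hint
  have hlaw (e : E) : ∫ ω, φ (a e ω) ∂P = ∫ z, φ z ∂ν := by
    rw [← (ha e).map_eq, integral_map (ha e).aemeasurable hφ.aestronglyMeasurable]
  simp_rw [integral_empiricalMeasure hφ]
  refine ⟨(integrable_finsetSum _ fun e _ => hcomp e).div_const _, ?_⟩
  rw [integral_div, integral_finsetSum _ fun e _ => hcomp e]
  simp [hlaw]

theorem hasSubgaussianMGF_integral_empiricalMeasure_sub {ι : Type*} {X : ι → Type*}
    [Nonempty E] [Fintype ι] [DecidableEq ι] [∀ i, MeasurableSpace (X i)]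
    {μ : ∀ i, Measure (X i)} [∀ i, IsProbabilityMeasure (μ i)] {ν : Measure Z}
    [IsProbabilityMeasure ν] {S : E → Finset ι} {d : ℕ} (hd : d ≠ 0)
    (hS : ∀ i, Finset.card {e | i ∈ S e} = d)
    {a : E → (∀ i, X i) → Z} (ha : ∀ e, MeasurePreserving (a e) (Measure.pi μ) ν)
    (hdep : ∀ e, DependsOn (a e) (S e)) {B : ℝ} {ℓ : Z → ℝ} (hℓ : IsBoundedLoss B ℓ) :
    HasSubgaussianMGF
      (fun x => ∫ z, ℓ z ∂(empiricalMeasure fun e => a e x) - ∫ z, ℓ z ∂ν)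
      (d / Fintype.card E * (‖B‖₊ / 2) ^ 2) (Measure.pi μ) := by
  have hloss : HasSubgaussianMGF (fun z => ℓ z - ∫ z, ℓ z ∂ν) ((‖B‖₊ / 2) ^ 2) ν := by
    simpa using hasSubgaussianMGF_of_mem_Icc hℓ.measurable.aemeasurable (ae_of_all ν hℓ.mem_Icc)
  have hterm (e : E) : HasSubgaussianMGF (fun x => ℓ (a e x) - ∫ z, ℓ z ∂ν) ((‖B‖₊ / 2) ^ 2)
      (Measure.pi μ) :=
    HasSubgaussianMGF.of_map (X := fun z => ℓ z - ∫ z, ℓ z ∂ν) (ha e).aemeasurable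
      ((ha e).map_eq.symm ▸ hloss)
  have hmean (x : ∀ i, X i) : ∫ z, ℓ z ∂(empiricalMeasure fun e => a e x) - ∫ z, ℓ z ∂ν =
      (∑ e, (ℓ (a e x) - ∫ z, ℓ z ∂ν)) / Fintype.card E := by
    rw [integral_empiricalMeasure hℓ.measurable.stronglyMeasurable, Finset.sum_sub_distrib,
      sub_div]
    simp
  simp_rw [hmean]
  exact hasSubgaussianMGF_average_of_dependsOn hd hS
    (fun e => (hℓ.measurable.comp (ha e).measurable).sub_const _)
    (fun e x y hxy => by rw [hdep e hxy]) hterm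

end EmpiricalMeasure

theorem ae_forall_exists_of_countable {Ω H C : Type*} [MeasurableSpace Ω] [Countable C]
    {P : Measure Ω} (κ : Ω → C) {F : Set H} {Q : H → Ω → Prop}
    (hQ : ∀ f ∈ F, ∀ᵐ ω ∂P, Q f ω) :
    ∀ᵐ ω ∂P, ∀ f ∈ F, ∃ ω', κ ω' = κ ω ∧ Q f ω' := by
  have hpos : ∀ᵐ ω ∂P, ∀ c, P (κ ⁻¹' {c}) = 0 → κ ω ≠ c :=
    ae_all_iff.2 fun c => Filter.eventually_imp_distrib_left.2 measure_eq_zero_iff_ae_notMem.1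
  filter_upwards [hpos] with ω hω f hf
  by_contra! hno
  exact hω (κ ω) (measure_mono_null hno (ae_iff.1 (hQ f hf))) rfl

namespace IsMarginExpectationCover

variable {H Z Ω : Type*} [MeasurableSpace Z] [MeasurableSpace Ω] {L : H → Z → ℝ} {B r : ℝ}
  {F : Set H} {G : Finset H}

theorem exists_abs_integral_sub_le (hG : IsMarginExpectationCover L B r F G) {f : H}
    (hf : f ∈ F) (hfL : IsBoundedLoss B (L f)) (μ ν : Measure Z) [IsProbabilityMeasure μ]
    [IsProbabilityMeasure ν] :
    ∃ g ∈ G, |∫ z, L f z ∂μ - ∫ z, L f z ∂ν| ≤ |∫ z, L g z ∂μ - ∫ z, L g z ∂ν| + 2 * r := by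
  have hmix : IsProbabilityMeasure ((2⁻¹ : ℝ≥0∞) • (μ + ν)) :=
    ⟨by simp [ENNReal.inv_two_add_inv_two]⟩
  obtain ⟨g, hg, hle⟩ := hG.exists_integral_le f hf _ hmix
  have hgL := hG.isBoundedLoss g hg
  have hint (m : Measure Z) [IsFiniteMeasure m] : Integrable (fun z => |L f z - L g z|) m :=
    (hfL.integrable.sub hgL.integrable).abs
  have hsum : ∫ z, |L f z - L g z| ∂μ + ∫ z, |L f z - L g z| ∂ν ≤ 2 * r := by
    rw [integral_smul_measure, integral_add_measure (hint μ) (hint ν)] at hle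
    simp only [ENNReal.toReal_inv, ENNReal.toReal_ofNat, smul_eq_mul] at hle
    linarith
  have hdist (m : Measure Z) [IsProbabilityMeasure m] :
      |∫ z, L f z ∂m - ∫ z, L g z ∂m| ≤ ∫ z, |L f z - L g z| ∂m := by
    rw [← integral_sub hfL.integrable hgL.integrable]
    exact abs_integral_le_integral_abs
  refine ⟨g, hg, ?_⟩
  calc |∫ z, L f z ∂μ - ∫ z, L f z ∂ν|
      = |(∫ z, L g z ∂μ - ∫ z, L g z ∂ν) + (∫ z, L f z ∂μ - ∫ z, L g z ∂μ) -
          (∫ z, L f z ∂ν - ∫ z, L g z ∂ν)| := by ring_nf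
    _ ≤ |∫ z, L g z ∂μ - ∫ z, L g z ∂ν| + |∫ z, L f z ∂μ - ∫ z, L g z ∂μ| +
          |∫ z, L f z ∂ν - ∫ z, L g z ∂ν| :=
        (abs_sub _ _).trans (by gcongr; exact abs_add_le _ _)
    _ ≤ |∫ z, L g z ∂μ - ∫ z, L g z ∂ν| + 2 * r := by
        linarith [hdist μ, hdist ν]

theorem ae_forall_exists_dist_integral_le (hG : IsMarginExpectationCover L B r F G) (hr : 0 < r)
    (hF : ∀ f ∈ F, IsBoundedLoss B (L f)) {P : Measure Ω} (m : Ω → Measure Z)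
    [∀ ω, IsProbabilityMeasure (m ω)] {Q : H → Ω → Prop} (hQ : ∀ f ∈ F, ∀ᵐ ω ∂P, Q f ω) :
    ∀ᵐ ω ∂P, ∀ f ∈ F, ∃ ω', Q f ω' ∧
      dist (∫ z, L f z ∂m ω) (∫ z, L f z ∂m ω') ≤ 3 * r := by
  let level (ω : Ω) (g : G) : ℤ := ⌊(∫ z, L g z ∂m ω) / r⌋
  filter_upwards [ae_forall_exists_of_countable level hQ] with ω hω f hf
  obtain ⟨ω', hlevel, hω'⟩ := hω f hf
  obtain ⟨g, hg, hle⟩ := hG.exists_abs_integral_sub_le hf (hF f hf) (m ω) (m ω')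
  have hclose : |∫ z, L g z ∂m ω - ∫ z, L g z ∂m ω'| < r := by
    have := Int.abs_sub_lt_one_of_floor_eq_floor (congrFun hlevel ⟨g, hg⟩).symm
    rwa [← sub_div, abs_div, abs_of_pos hr, div_lt_one hr] at this
  exact ⟨ω', hω', by rw [Real.dist_eq]; linarith⟩

theorem measure_exists_lt_abs_integral_sub_le_card_mul {P : Measure Ω} [IsFiniteMeasure P]
    (hG : IsMarginExpectationCover L B r F G) (hF : ∀ f ∈ F, IsBoundedLoss B (L f))
    {ν : Measure Z} [IsProbabilityMeasure ν] {m : Ω → Measure Z}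
    [∀ ω, IsProbabilityMeasure (m ω)] {c : ℝ≥0}
    (hsub : ∀ g ∈ G, HasSubgaussianMGF (fun ω => ∫ z, L g z ∂m ω - ∫ z, L g z ∂ν) c P)
    {ε : ℝ} (hε : 0 ≤ ε) :
    P {ω | ∃ f ∈ F, ε + 2 * r < |∫ z, L f z ∂m ω - ∫ z, L f z ∂ν|} ≤
      ENNReal.ofReal (G.card * (2 * Real.exp (-ε ^ 2 / (2 * c)))) := by
  calc P {ω | ∃ f ∈ F, ε + 2 * r < |∫ z, L f z ∂m ω - ∫ z, L f z ∂ν|}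
      ≤ P (⋃ g ∈ G, {ω | ε ≤ |∫ z, L g z ∂m ω - ∫ z, L g z ∂ν|}) := by
        refine measure_mono ?_
        rintro ω ⟨f, hf, hlt⟩
        obtain ⟨g, hg, hle⟩ := hG.exists_abs_integral_sub_le hf (hF f hf) (m ω) ν
        exact Set.mem_biUnion hg (show ε ≤ _ by linarith)
    _ ≤ ∑ g ∈ G, P {ω | ε ≤ |∫ z, L g z ∂m ω - ∫ z, L g z ∂ν|} :=
        measure_biUnion_finset_le _ _
    _ ≤ ∑ _g ∈ G, ENNReal.ofReal (2 * Real.exp (-ε ^ 2 / (2 * c))) :=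
        Finset.sum_le_sum fun g hg => measure_le_abs_le_of_hasSubgaussianMGF (hsub g hg) hε
    _ = ENNReal.ofReal (G.card * (2 * Real.exp (-ε ^ 2 / (2 * c)))) := by
        rw [Finset.sum_const, nsmul_eq_mul, ← ENNReal.ofReal_natCast,
          ← ENNReal.ofReal_mul (by positivity)]

theorem measure_exists_lt_abs_integral_sub_le {P : Measure Ω} [IsFiniteMeasure P]
    (hG : IsMarginExpectationCover L B r F G) (hF : ∀ f ∈ F, IsBoundedLoss B (L f))
    {ν : Measure Z} [IsProbabilityMeasure ν] {m : Ω → Measure Z}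
    [∀ ω, IsProbabilityMeasure (m ω)] {c : ℝ≥0} {M δ : ℝ} (hB : 0 < B) (hM : 0 < M)
    (hc : (c : ℝ) = (B / 2) ^ 2 / M) (hδ : δ ∈ Set.Ioc (0 : ℝ) 2)
    (hsub : ∀ g ∈ G, HasSubgaussianMGF (fun ω => ∫ z, L g z ∂m ω - ∫ z, L g z ∂ν) c P) :
    P {ω | ∃ f ∈ F, B * √(Real.log (2 * G.card / δ) / (2 * M)) + 2 * r <
      |∫ z, L f z ∂m ω - ∫ z, L f z ∂ν|} ≤ ENNReal.ofReal δ := by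
  refine (hG.measure_exists_lt_abs_integral_sub_le_card_mul hF hsub (by positivity)).trans
    (ENNReal.ofReal_le_ofReal ?_)
  rcases Nat.eq_zero_or_pos G.card with hcard | hcard
  · simp [hcard, hδ.1.le]
  have hone : 1 ≤ 2 * G.card / δ := by
    rw [one_le_div hδ.1]
    have : (1 : ℝ) ≤ G.card := mod_cast hcard
    linarith [hδ.2]
  have hlog : 0 ≤ Real.log (2 * G.card / δ) := Real.log_nonneg hone
  have hexponent : -(B * √(Real.log (2 * G.card / δ) / (2 * M))) ^ 2 / (2 * c) =
      -Real.log (2 * G.card / δ) := by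
    rw [mul_pow, Real.sq_sqrt (by positivity), hc]
    field_simp
  rw [hexponent, Real.exp_neg, Real.exp_log (by linarith), inv_div]
  exact le_of_eq (by field_simp)

theorem measure_exists_lt_abs_integral_empiricalMeasure_sub_le {E ι : Type*} {X : ι → Type*}
    [Fintype E] [Nonempty E] [Fintype ι] [DecidableEq ι] [∀ i, MeasurableSpace (X i)]
    {μ : ∀ i, Measure (X i)} [∀ i, IsProbabilityMeasure (μ i)] {ν : Measure Z}
    [IsProbabilityMeasure ν] {S : E → Finset ι} {d : ℕ} {M δ : ℝ}
    (hG : IsMarginExpectationCover L B r F G) (hF : ∀ f ∈ F, IsBoundedLoss B (L f)) (hB : 0 < B)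
    (hδ : δ ∈ Set.Ioc (0 : ℝ) 2) (hS : ∀ i, Finset.card {e | i ∈ S e} = d) (hd : d ≠ 0)
    (hM : (Fintype.card E : ℝ) = M * d) {a : E → (∀ i, X i) → Z}
    (ha : ∀ e, MeasurePreserving (a e) (Measure.pi μ) ν) (hdep : ∀ e, DependsOn (a e) (S e)) :
    Measure.pi μ {x | ∃ f ∈ F, B * √(Real.log (2 * G.card / δ) / (2 * M)) + 2 * r <
      |∫ z, L f z ∂(empiricalMeasure fun e => a e x) - ∫ z, L f z ∂ν|} ≤ ENNReal.ofReal δ := by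
  have hd₀ : (0 : ℝ) < d := mod_cast Nat.pos_of_ne_zero hd
  have hM₀ : 0 < M := pos_of_mul_pos_left (hM ▸ mod_cast Fintype.card_pos) hd₀.le
  refine hG.measure_exists_lt_abs_integral_sub_le hF hB hM₀ ?_ hδ fun g hg =>
    hasSubgaussianMGF_integral_empiricalMeasure_sub hd hS ha hdep (hG.isBoundedLoss g hg)
  push_cast
  rw [hM, Real.norm_of_nonneg hB.le]
  field_simp

end IsMarginExpectationCover

theorem ae_forall_integral_mem_of_isClosed {H Z Ω : Type*} [MeasurableSpace Z]
    [MeasurableSpace Ω] {L : H → Z → ℝ} {B : ℝ} {F : Set H}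
    (hcov : ∀ r > 0, ∃ G, IsMarginExpectationCover L B r F G)
    (hF : ∀ f ∈ F, IsBoundedLoss B (L f)) {P : Measure Ω} (m : Ω → Measure Z)
    [∀ ω, IsProbabilityMeasure (m ω)] {s : Set ℝ} (hs : IsClosed s)
    (hmem : ∀ f ∈ F, ∀ᵐ ω ∂P, ∫ z, L f z ∂m ω ∈ s) :
    ∀ᵐ ω ∂P, ∀ f ∈ F, ∫ z, L f z ∂m ω ∈ s := by
  have happrox : ∀ᵐ ω ∂P, ∀ k : ℕ, ∀ f ∈ F, ∃ ω', ∫ z, L f z ∂m ω' ∈ s ∧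
      dist (∫ z, L f z ∂m ω) (∫ z, L f z ∂m ω') ≤ 3 * (1 / ((k : ℝ) + 1)) := by
    refine ae_all_iff.2 fun k => ?_
    obtain ⟨G, hG⟩ := hcov (1 / ((k : ℝ) + 1)) Nat.one_div_pos_of_nat
    exact hG.ae_forall_exists_dist_integral_le Nat.one_div_pos_of_nat hF m hmem
  filter_upwards [happrox] with ω hω f hf
  refine hs.closure_subset (Metric.mem_closure_iff.2 fun ε hε => ?_)
  obtain ⟨k, hk⟩ := exists_nat_one_div_lt (show 0 < ε / 3 by positivity)
  obtain ⟨ω', hω', hdist⟩ := hω k f hf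
  exact ⟨_, hω', by linarith⟩

theorem integral_mem_of_ae_integral_empiricalMeasure_mem {E Z Ω : Type*} [Fintype E] [Nonempty E]
    [MeasurableSpace Z] [MeasurableSpace Ω] {P : Measure Ω} [IsProbabilityMeasure P]
    {ν : Measure Z} [IsFiniteMeasure ν] {a : E → Ω → Z} (ha : ∀ e, MeasurePreserving (a e) P ν)
    {B : ℝ} {ℓ : Z → ℝ} (hℓ : IsBoundedLoss B ℓ) {s : Set ℝ} (hconv : Convex ℝ s)
    (hs : IsClosed s) (hmem : ∀ᵐ ω ∂P, ∫ z, ℓ z ∂(empiricalMeasure fun e => a e ω) ∈ s) :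
    ∫ z, ℓ z ∂ν ∈ s := by
  obtain ⟨hint, hmean⟩ :=
    integral_integral_empiricalMeasure ha hℓ.measurable.stronglyMeasurable hℓ.integrable
  exact hmean ▸ hconv.integral_mem hs hmem hint

section Ratio

theorem div_sub_div_le {b S A C s o s' o' : ℝ} (hb : 0 < b) (hC : 0 ≤ C) (hA : 0 ≤ A)
    (ho : b ≤ o) (hs : s ∈ Set.Icc 0 S) (ho' : 0 < o') (hs' : 0 ≤ s') (hA' : s - A ≤ s')
    (hC' : o' ≤ o + C) :
    s / o - s' / o' ≤ S / b - (S - A) / (b + C) := by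
  have hgap (x y : ℝ) (hy : 0 < y) :
      x / y - (x - A) / (y + C) = x * C / (y * (y + C)) + A / (y + C) := by
    field_simp
    ring
  have ho₀ : 0 < o := hb.trans_le ho
  have hS : 0 ≤ S := hs.1.trans hs.2
  calc s / o - s' / o'
      ≤ s / o - s' / (o + C) := by gcongr
    _ ≤ s / o - (s - A) / (o + C) := by gcongr
    _ = s * C / (o * (o + C)) + A / (o + C) := hgap s o ho₀
    _ ≤ S * C / (b * (b + C)) + A / (b + C) := by
        gcongr
        exact hs.2
    _ = S / b - (S - A) / (b + C) := (hgap S b hb).symm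

theorem abs_div_sub_div_le {b S A C s o s' o' : ℝ} (hb : 0 < b) (ho : b ≤ o) (ho' : b ≤ o')
    (hs : s ∈ Set.Icc 0 S) (hs' : s' ∈ Set.Icc 0 S) (hA : |s - s'| ≤ A) (hC : |o - o'| ≤ C) :
    |s / o - s' / o'| ≤ S / b - (S - A) / (b + C) := by
  have hA₀ : 0 ≤ A := (abs_nonneg _).trans hA
  have hC₀ : 0 ≤ C := (abs_nonneg _).trans hC
  rw [abs_le] at hA hC
  rw [abs_sub_le_iff]
  constructor
  · exact div_sub_div_le hb hC₀ hA₀ ho hs (hb.trans_le ho') hs'.1 (by linarith) (by linarith)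
  · exact div_sub_div_le hb hC₀ hA₀ ho' hs' (hb.trans_le ho) hs.1 (by linarith) (by linarith)

theorem measure_exists_lt_abs_div_sub_div_le {Ω H : Type*} [MeasurableSpace Ω] {P : Measure Ω}
    {F : Set H} {o s : H → Ω → ℝ} {o₀ s₀ : H → ℝ} {b S A C : ℝ} {ε₁ ε₂ : ℝ≥0∞} (hb : 0 < b)
    (ho : ∀ᵐ ω ∂P, ∀ f ∈ F, b ≤ o f ω) (hs : ∀ᵐ ω ∂P, ∀ f ∈ F, s f ω ∈ Set.Icc 0 S)
    (ho₀ : ∀ f ∈ F, b ≤ o₀ f) (hs₀ : ∀ f ∈ F, s₀ f ∈ Set.Icc 0 S)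
    (hC : P {ω | ∃ f ∈ F, C < |o f ω - o₀ f|} ≤ ε₁)
    (hA : P {ω | ∃ f ∈ F, A < |s f ω - s₀ f|} ≤ ε₂) :
    P {ω | ∃ f ∈ F, S / b - (S - A) / (b + C) < |s f ω / o f ω - s₀ f / o₀ f|} ≤ ε₁ + ε₂ := by
  refine (measure_mono_ae ?_).trans ((measure_union_le _ _).trans (add_le_add hC hA))
  filter_upwards [ho, hs] with ω hoω hsω ⟨f, hf, hlt⟩
  by_contra hsmall
  obtain ⟨hoC, hsA⟩ := not_or.1 hsmall
  refine hlt.not_ge (abs_div_sub_div_le hb (hoω f hf) (ho₀ f hf) (hsω f hf) (hs₀ f hf) ?_ ?_)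
  · exact not_lt.1 fun h => hsA ⟨f, hf, h⟩
  · exact not_lt.1 fun h => hoC ⟨f, hf, h⟩

end Ratio

section OffDiagonal

theorem measurePreserving_eval_prodMk_eval {ι Z : Type*} [Fintype ι] [MeasurableSpace Z]
    (D : Measure Z) [IsProbabilityMeasure D] {i j : ι} (hij : i ≠ j) :
    MeasurePreserving (fun ω : ι → Z => (ω i, ω j)) (Measure.pi fun _ => D) (D.prod D) := by
  refine ⟨by fun_prop, ?_⟩
  have hindep : IndepFun (fun ω : ι → Z => ω i) (fun ω => ω j) (Measure.pi fun _ => D) :=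
    (iIndepFun_pi (X := fun _ z => z) fun _ => aemeasurable_id).indepFun hij
  rw [hindep.map_prod_eq_prod_map_map (measurable_pi_apply i).aemeasurable
    (measurable_pi_apply j).aemeasurable]
  congr 1
  · exact (measurePreserving_eval (fun _ : ι => D) i).map_eq
  · exact (measurePreserving_eval (fun _ : ι => D) j).map_eq

variable {ι : Type*} [Fintype ι] [DecidableEq ι]

theorem sum_subtype_fst_ne_snd {M : Type*} [AddCommMonoid M] (φ : ι → ι → M) :
    ∑ e : {p : ι × ι // p.1 ≠ p.2}, φ e.1.1 e.1.2 =
      ∑ i, ∑ j ∈ Finset.univ.erase i, φ i j := by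
  rw [Finset.sum_sigma', ← Finset.sum_subtype (Finset.univ.filter fun p : ι × ι => p.1 ≠ p.2)
    (by simp) fun p => φ p.1 p.2]
  exact Finset.sum_bij' (fun p _ => ⟨p.1, p.2⟩) (fun p _ => (p.1, p.2)) (by simp [eq_comm])
    (by simp [eq_comm]) (by simp) (by simp) (by simp)

theorem card_subtype_fst_ne_snd :
    Fintype.card {p : ι × ι // p.1 ≠ p.2} = Fintype.card ι * (Fintype.card ι - 1) := by
  rw [Fintype.card_eq_sum_ones, sum_subtype_fst_ne_snd fun _ _ => 1]
  simp

theorem card_filter_mem_pair_subtype_fst_ne_snd (i : ι) :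
    Finset.card {e : {p : ι × ι // p.1 ≠ p.2} | i ∈ ({e.1.1, e.1.2} : Finset ι)} =
      2 * (Fintype.card ι - 1) := by
  have hindicator (e : {p : ι × ι // p.1 ≠ p.2}) :
      (if i ∈ ({e.1.1, e.1.2} : Finset ι) then 1 else 0) =
        (if e.1.1 = i then 1 else 0) + (if e.1.2 = i then 1 else 0) := by
    have := e.2
    grind
  rw [Finset.card_filter, Finset.sum_congr rfl fun e _ => hindicator e, Finset.sum_add_distrib,
    sum_subtype_fst_ne_snd fun k _ => if k = i then 1 else 0,
    sum_subtype_fst_ne_snd fun _ j => if j = i then 1 else 0, two_mul]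
  congr 1
  · simp
  · simp [Finset.sum_ite, Finset.filter_ne]

end OffDiagonal

section SwitchedMeasure

variable {ι Z H : Type*} [Fintype ι] [MeasurableSpace Z] {D : Measure Z} [IsProbabilityMeasure D]
  {L : H → Z → ℝ} {B r δ : ℝ} {F : Set H} {G : Finset H}

theorem IsMarginExpectationCover.measure_exists_lt_abs_integral_sample_sub_le
    [Nonempty ι] (hG : IsMarginExpectationCover L B r F G) (hF : ∀ f ∈ F, IsBoundedLoss B (L f))
    (hB : 0 < B) (hδ : δ ∈ Set.Ioc (0 : ℝ) 2) :
    (Measure.pi fun _ : ι => D) {ω | ∃ f ∈ F,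
      B * √(Real.log (2 * G.card / δ) / (2 * Fintype.card ι)) + 2 * r <
        |∫ z, L f z ∂empiricalMeasure ω - ∫ z, L f z ∂D|} ≤ ENNReal.ofReal δ := by
  classical
  exact hG.measure_exists_lt_abs_integral_empiricalMeasure_sub_le
    (S := fun i => {i}) (d := 1) hF hB hδ
    (fun i => by simp [Finset.filter_eq]) one_ne_zero (by simp)
    (fun i => measurePreserving_eval (fun _ : ι => D) i) fun i ω ω' h => h i (by simp)

variable {σ : Z × Z → Z}

theorem measurePreserving_recombine (hσ : Measurable σ) (e : {p : ι × ι // p.1 ≠ p.2}) :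
    MeasurePreserving (fun ω : ι → Z => σ (ω e.1.1, ω e.1.2)) (Measure.pi fun _ => D)
      ((D.prod D).map σ) :=
  (hσ.measurePreserving (D.prod D)).comp (measurePreserving_eval_prodMk_eval D e.2)

variable [DecidableEq ι]

/-- The empirical distribution of the recombinations `σ (ω i, ω j)` of the ordered pairs of
distinct sample points; model reliance has `σ ((y, x₁, x₂), (y', x₁', x₂')) = (y', x₁, x₂')`. -/
noncomputable abbrev switchedMeasure (σ : Z × Z → Z) (ω : ι → Z) : Measure Z :=
  empiricalMeasure fun e : {p : ι × ι // p.1 ≠ p.2} => σ (ω e.1.1, ω e.1.2)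

theorem integral_switchedMeasure {φ : Z → ℝ} (hφ : StronglyMeasurable φ) (σ : Z × Z → Z)
    (ω : ι → Z) :
    ∫ z, φ z ∂switchedMeasure σ ω = (∑ i, ∑ j ∈ Finset.univ.erase i, φ (σ (ω i, ω j))) /
      (Fintype.card ι * (Fintype.card ι - 1)) := by
  rw [integral_empiricalMeasure hφ, sum_subtype_fst_ne_snd fun i j => φ (σ (ω i, ω j)),
    card_subtype_fst_ne_snd]
  rcases isEmpty_or_nonempty ι with _ | _
  · simp
  · push_cast [Nat.cast_pred Fintype.card_pos]
    rfl

instance [Nontrivial ι] : Nonempty {p : ι × ι // p.1 ≠ p.2} :=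
  let ⟨i, j, hij⟩ := exists_pair_ne ι
  ⟨⟨(i, j), hij⟩⟩

theorem IsMarginExpectationCover.measure_exists_lt_abs_integral_switchedMeasure_sub_le
    [Nontrivial ι] (hG : IsMarginExpectationCover L B r F G) (hF : ∀ f ∈ F, IsBoundedLoss B (L f))
    (hB : 0 < B) (hδ : δ ∈ Set.Ioc (0 : ℝ) 2) (hσ : Measurable σ) :
    (Measure.pi fun _ : ι => D) {ω | ∃ f ∈ F,
      B * √(Real.log (2 * G.card / δ) / Fintype.card ι) + 2 * r <
        |∫ z, L f z ∂switchedMeasure σ ω - ∫ q, L f (σ q) ∂D.prod D|} ≤ ENNReal.ofReal δ := by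
  have : IsProbabilityMeasure ((D.prod D).map σ) :=
    Measure.isProbabilityMeasure_map hσ.aemeasurable
  have hcard : 1 < Fintype.card ι := Fintype.one_lt_card
  have hdev := hG.measure_exists_lt_abs_integral_empiricalMeasure_sub_le
    (S := fun e : {p : ι × ι // p.1 ≠ p.2} => {e.1.1, e.1.2}) (M := Fintype.card ι / 2) hF hB hδ
    card_filter_mem_pair_subtype_fst_ne_snd (by omega)
    (by
      rw [card_subtype_fst_ne_snd]
      push_cast
      ring)
    (measurePreserving_recombine (D := D) hσ)
    fun e ω ω' h => by rw [h e.1.1 (by simp), h e.1.2 (by simp)]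
  refine (measure_mono ?_).trans hdev
  rintro ω ⟨f, hf, hlt⟩
  refine ⟨f, hf, ?_⟩
  rwa [mul_div_cancel₀ _ two_ne_zero,
    integral_map hσ.aemeasurable (hF f hf).measurable.aestronglyMeasurable]

theorem measure_exists_lt_abs_div_integral_switchedMeasure_sub_le [Nontrivial ι]
    {b S r₁ r₂ : ℝ} {G₁ G₂ : Finset H} (hσ : Measurable σ) (hb : 0 < b)
    (hδ : δ ∈ Set.Ioc (0 : ℝ) 4) (hF : ∀ f ∈ F, IsBoundedLoss B (L f))
    (hsample : ∀ f ∈ F, ∀ᵐ ω ∂Measure.pi fun _ : ι => D,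
      ∫ z, L f z ∂empiricalMeasure ω ∈ Set.Ici b)
    (hswitched : ∀ f ∈ F, ∀ᵐ ω ∂Measure.pi fun _ : ι => D,
      ∫ z, L f z ∂switchedMeasure σ ω ∈ Set.Icc 0 S)
    (hcov : ∀ r > 0, ∃ G, IsMarginExpectationCover L B r F G)
    (hG₁ : IsMarginExpectationCover L B r₁ F G₁) (hG₂ : IsMarginExpectationCover L B r₂ F G₂) :
    (Measure.pi fun _ : ι => D) {ω | ∃ f ∈ F,
      S / b - (S - (B * √(Real.log (4 * G₂.card / δ) / Fintype.card ι) + 2 * r₂)) /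
          (b + (B * √(Real.log (4 * G₁.card / δ) / (2 * Fintype.card ι)) + 2 * r₁)) <
        |(∫ z, L f z ∂switchedMeasure σ ω) / (∫ z, L f z ∂empiricalMeasure ω) -
          (∫ q, L f (σ q) ∂D.prod D) / ∫ z, L f z ∂D|} ≤ ENNReal.ofReal δ := by
  rcases F.eq_empty_or_nonempty with rfl | ⟨f₀, hf₀⟩
  · simp
  have hsample_pop (f : H) (hf : f ∈ F) : ∫ z, L f z ∂D ∈ Set.Ici b :=
    integral_mem_of_ae_integral_empiricalMeasure_mem (measurePreserving_eval fun _ : ι => D)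
      (hF f hf) (convex_Ici b) isClosed_Ici (hsample f hf)
  have hswitched_pop (f : H) (hf : f ∈ F) : ∫ q, L f (σ q) ∂D.prod D ∈ Set.Icc 0 S := by
    rw [← integral_map hσ.aemeasurable (hF f hf).measurable.aestronglyMeasurable]
    exact integral_mem_of_ae_integral_empiricalMeasure_mem (measurePreserving_recombine hσ)
      (hF f hf) (convex_Icc 0 S) isClosed_Icc (hswitched f hf)
  have hB : 0 < B := hb.trans_le <| (hsample_pop f₀ hf₀).trans <|
    ((convex_Icc 0 B).integral_mem isClosed_Icc (ae_of_all D (hF f₀ hf₀).mem_Icc)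
      (hF f₀ hf₀).integrable).2
  have hδ₂ : δ / 2 ∈ Set.Ioc (0 : ℝ) 2 := ⟨by linarith [hδ.1], by linarith [hδ.2]⟩
  have hfour (x : ℝ) : 4 * x / δ = 2 * x / (δ / 2) := by ring
  simp_rw [hfour]
  refine (measure_exists_lt_abs_div_sub_div_le hb
    (ae_forall_integral_mem_of_isClosed hcov hF _ isClosed_Ici hsample)
    (ae_forall_integral_mem_of_isClosed hcov hF _ isClosed_Icc hswitched) hsample_pop hswitched_pop
    (hG₁.measure_exists_lt_abs_integral_sample_sub_le hF hB hδ₂)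
    (hG₂.measure_exists_lt_abs_integral_switchedMeasure_sub_le hF hB hδ₂ hσ)).trans_eq ?_
  rw [← ENNReal.ofReal_add hδ₂.1.le hδ₂.1.le, add_halves]

end SwitchedMeasure

theorem stmt_5_general {H Z : Type*} [MeasurableSpace Z] {D : Measure Z} [IsProbabilityMeasure D]
    {σ : Z × Z → Z} (hσ : Measurable σ) {L : H → Z → ℝ} {B b S r₁ r₂ δ : ℝ} {F : Set H}
    {G₁ G₂ : Finset H} {n : ℕ} (hn : 2 ≤ n) (hb : 0 < b) (hδ : δ ∈ Set.Ioo (0 : ℝ) 1)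
    (hF : ∀ f ∈ F, IsBoundedLoss B (L f))
    (hmean : ∀ f ∈ F, ∀ᵐ ω ∂Measure.pi fun _ : Fin n => D, b ≤ (∑ i, L f (ω i)) / n ∧
      (∑ i, ∑ j ∈ Finset.univ.erase i, L f (σ (ω i, ω j))) / ((n : ℝ) * (n - 1)) ≤ S)
    (hcov : ∀ r > 0, ∃ G, IsMarginExpectationCover L B r F G)
    (hG₁ : IsMarginExpectationCover L B r₁ F G₁) (hG₂ : IsMarginExpectationCover L B r₂ F G₂) :
    (Measure.pi fun _ : Fin n => D) {ω | ∃ f ∈ F,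
      S / b - (S - (B * √(Real.log (4 * G₂.card / δ) / n) + 2 * r₂)) /
          (b + (B * √(Real.log (4 * G₁.card / δ) / (2 * n)) + 2 * r₁)) <
        |(∑ i, ∑ j ∈ Finset.univ.erase i, L f (σ (ω i, ω j))) / ((n : ℝ) * (n - 1)) /
            ((∑ i, L f (ω i)) / n) - (∫ q, L f (σ q) ∂D.prod D) / ∫ z, L f z ∂D|} ≤
      ENNReal.ofReal δ := by
  have : Nontrivial (Fin n) := Fin.nontrivial_iff_two_le.2 hn
  have hsample (f : H) (hf : f ∈ F) (ω : Fin n → Z) :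
      ∫ z, L f z ∂empiricalMeasure ω = (∑ i, L f (ω i)) / n := by
    rw [integral_empiricalMeasure (hF f hf).measurable.stronglyMeasurable, Fintype.card_fin]
  have hswitched (f : H) (hf : f ∈ F) (ω : Fin n → Z) :
      ∫ z, L f z ∂switchedMeasure σ ω =
        (∑ i, ∑ j ∈ Finset.univ.erase i, L f (σ (ω i, ω j))) / ((n : ℝ) * (n - 1)) := by
    rw [integral_switchedMeasure (hF f hf).measurable.stronglyMeasurable, Fintype.card_fin]
  refine (measure_mono ?_).trans <| measure_exists_lt_abs_div_integral_switchedMeasure_sub_le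
    (S := S) hσ hb ⟨hδ.1, by linarith [hδ.2]⟩ hF ?_ ?_ hcov hG₁ hG₂
  · rintro ω ⟨f, hf, hlt⟩
    exact ⟨f, hf, by simpa only [hsample f hf, hswitched f hf, Fintype.card_fin] using hlt⟩
  · intro f hf
    filter_upwards [hmean f hf] with ω hω using (hsample f hf ω).symm ▸ hω.1
  · intro f hf
    filter_upwards [hmean f hf] with ω hω
    exact ⟨integral_nonneg fun z => ((hF f hf).mem_Icc z).1, (hswitched f hf ω).symm ▸ hω.2⟩

/-- Theorem 5 (uniform bound for empirical model reliance): if Assumptions 1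
and 3 hold for every `f ∈ ℱ`, then for any `r > 0` and `δ ∈ (0,1)`, the
probability that some `f ∈ ℱ` has `|MR̂(f) − MR(f)| > q(δ, r, n)` is at most
`δ`, where `q` is defined through the covering number `𝒩(ℱ, ·)` for
`r`-margin-expectation-covers. -/
theorem stmt_5 {𝒴 𝒳1 𝒳2 : Type*}
    [MeasurableSpace 𝒴] [MeasurableSpace 𝒳1] [MeasurableSpace 𝒳2]
    (D : Measure (𝒴 × 𝒳1 × 𝒳2)) [IsProbabilityMeasure D]
    (F : Set ((𝒳1 × 𝒳2) → 𝒴))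
    (L : ((𝒳1 × 𝒳2) → 𝒴) → (𝒴 × 𝒳1 × 𝒳2) → ℝ)
    (hL : ∀ f z, 0 ≤ L f z)
    (hLmeas : ∀ f ∈ F, Measurable (L f))
    (n : ℕ) (hn : 2 ≤ n)
    (Bind borig Bswitch : ℝ) (hborig : 0 < borig)
    (r δ : ℝ) (hr : 0 < r) (hδ : δ ∈ Set.Ioo (0 : ℝ) 1)
    -- population quantities
    (eorig eswitch : ((𝒳1 × 𝒳2) → 𝒴) → ℝ)
    (heorig : ∀ f, eorig f = ∫ z, L f z ∂D)
    (heswitch : ∀ f, eswitch f = ∫ q, L f (q.2.1, q.1.2.1, q.2.2.2) ∂(D.prod D))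
    (MR : ((𝒳1 × 𝒳2) → 𝒴) → ℝ) (hMR : ∀ f, MR f = eswitch f / eorig f)
    -- empirical quantities, over the i.i.d. sample measure `P = Dⁿ`
    (P : Measure (Fin n → 𝒴 × 𝒳1 × 𝒳2)) (hP : P = Measure.pi fun _ => D)
    (ehatorig ehatswitch : ((𝒳1 × 𝒳2) → 𝒴) → (Fin n → 𝒴 × 𝒳1 × 𝒳2) → ℝ)
    (hehatorig : ∀ f ω, ehatorig f ω = (∑ i, L f (ω i)) / n)
    (hehatswitch : ∀ f ω, ehatswitch f ω =
      (∑ i, ∑ j ∈ Finset.univ.erase i, L f ((ω j).1, (ω i).2.1, (ω j).2.2)) /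
        ((n : ℝ) * ((n : ℝ) - 1)))
    (MRhat : ((𝒳1 × 𝒳2) → 𝒴) → (Fin n → 𝒴 × 𝒳1 × 𝒳2) → ℝ)
    (hMRhat : ∀ f ω, MRhat f ω = ehatswitch f ω / ehatorig f ω)
    -- Assumptions 1 and 3 for every `f ∈ ℱ`
    (hA1 : ∀ f ∈ F, ∀ z, L f z ≤ Bind)
    (hA3 : ∀ f ∈ F, ∀ᵐ ω ∂P, borig ≤ ehatorig f ω ∧ ehatswitch f ω ≤ Bswitch)
    -- `𝒩(ℱ, s)`: the size of the smallest `s`-margin-expectation-cover of `ℱ`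
    (N : ℝ → ℕ)
    (hN : ∀ s : ℝ, 0 < s → IsLeast
      {m : ℕ | ∃ G : Finset ((𝒳1 × 𝒳2) → 𝒴), G.card = m ∧
        (∀ g ∈ G, Measurable (L g) ∧ ∀ z, 0 ≤ L g z ∧ L g z ≤ Bind) ∧
        ∀ f ∈ F, ∀ D' : Measure (𝒴 × 𝒳1 × 𝒳2), IsProbabilityMeasure D' →
          ∃ g ∈ G, (∫ z, |L f z - L g z| ∂D') ≤ s} (N s))
    -- `q(δ, r, n)`
    (qv : ℝ)
    (hqv : qv = Bswitch / borig -
      (Bswitch - (Bind * Real.sqrt (Real.log (4 * (N (r * Real.sqrt 2) : ℝ) / δ) / n)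
          + 2 * r * Real.sqrt 2)) /
        (borig + (Bind * Real.sqrt (Real.log (4 * (N r : ℝ) / δ) / (2 * n)) + 2 * r))) :
    P {ω | ∃ f ∈ F, qv < |MRhat f ω - MR f|} ≤ ENNReal.ofReal δ := by
  obtain ⟨G₁, hG₁card, hG₁⟩ := (hN r hr).1
  obtain ⟨G₂, hG₂card, hG₂⟩ := (hN (r * √2) (by positivity)).1
  have hcov {s : ℝ} {G : Finset ((𝒳1 × 𝒳2) → 𝒴)} (hG : (∀ g ∈ G, Measurable (L g) ∧
      ∀ z, 0 ≤ L g z ∧ L g z ≤ Bind) ∧ ∀ f ∈ F, ∀ D' : Measure (𝒴 × 𝒳1 × 𝒳2),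
      IsProbabilityMeasure D' → ∃ g ∈ G, (∫ z, |L f z - L g z| ∂D') ≤ s) :
      IsMarginExpectationCover L Bind s F G :=
    ⟨fun g hg => ⟨(hG.1 g hg).1, (hG.1 g hg).2⟩, hG.2⟩
  have hcovers (s : ℝ) (hs : s > 0) : ∃ G, IsMarginExpectationCover L Bind s F G :=
    (hN s hs).1.imp fun G hG => hcov hG.2
  subst hP
  simp only [hehatorig, hehatswitch] at hA3
  simp only [hqv, hMR, hMRhat, heorig, heswitch, hehatorig, hehatswitch, ← hG₁card, ← hG₂card,
    mul_assoc 2 r]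
  exact stmt_5_general (σ := fun q => (q.2.1, q.1.2.1, q.2.2.2)) (by fun_prop) hn hborig hδ
    (fun f hf => ⟨hLmeas f hf, fun z => ⟨hL f z, hA1 f hf z⟩⟩) hA3 hcovers (hcov hG₁) (hcov hG₂)
end
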